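/- For every n ≥ 1, Σ_{G ∈ G_{n+1}} y^{unl(G)} t^{impp(G)} = Σ_{T ∈ C_{n+1}} (y+1)^{impe(T)-impp(T)} (y+t)^{impp(T)}, as an identity of polynomials in y and t, where the left sum is over Greg trees of size n+1 rooted at 1 and the right sum is over Cayley trees of size n+1 rooted at 1. -/

import Mathlib

noncomputable section

open MvPolynomial Function

/-! ### The polynomial sequences -/

/-- The generalized Ramanujan polynomials `Q n`, in the variables
`x = X 0`, `y = X 1`, `z = X 2`, `t = X 3`:
`Q 1 = 1` and `Q (n+1) = (x + n z + n (y+t)) Q n + (y+t) y ∂_y (Q n)` for `n ≥ 1`. -/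
def Qpoly : ℕ → MvPolynomial (Fin 4) ℚ
  | 0 => 1
  | 1 => 1
  | n + 2 =>
      (X 0 + C ((n : ℚ) + 1) * X 2 + C ((n : ℚ) + 1) * (X 1 + X 3)) * Qpoly (n + 1)
        + (X 1 + X 3) * (X 1 * pderiv 1 (Qpoly (n + 1)))

/-- `R n (x,y,z,t) = Q n (x, y+1, z, t-1)`. -/
def Rpoly (n : ℕ) : MvPolynomial (Fin 4) ℚ :=
  bind₁ (fun i : Fin 4 => if i = 1 then X 1 + 1 else if i = 3 then X 3 - 1 else X i) (Qpoly n)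

/-- `H 1 = 1` and `H (n+1) = (2n-1+(n+1)y) H n + (1+y)^2 H n'` for `n ≥ 1`. -/
def Hpoly : ℕ → Polynomial ℚ
  | 0 => 1
  | 1 => 1
  | n + 2 =>
      (Polynomial.C (2 * (n : ℚ) + 1) + Polynomial.C ((n : ℚ) + 2) * Polynomial.X)
          * Hpoly (n + 1)
        + (1 + Polynomial.X) ^ 2 * Polynomial.derivative (Hpoly (n + 1))

/-- The Ramanujan polynomials, in the variables `x = X 0`, `y = X 1`:
`P 1 = 1` and `P (n+1) = (x + n + n y) P n + y^2 ∂_y (P n)` for `n ≥ 1`. -/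
def Ppoly : ℕ → MvPolynomial (Fin 2) ℚ
  | 0 => 1
  | 1 => 1
  | n + 2 =>
      (X 0 + C ((n : ℚ) + 1) * (1 + X 1)) * Ppoly (n + 1)
        + X 1 ^ 2 * pderiv 1 (Ppoly (n + 1))

/-- `C 1 = 1` and `C (n+1) = n (1+y) C n + y^2 C n'` for `n ≥ 1`. -/
def Cpoly : ℕ → Polynomial ℚ
  | 0 => 1
  | 1 => 1
  | n + 2 =>
      Polynomial.C ((n : ℚ) + 1) * (1 + Polynomial.X) * Cpoly (n + 1)
        + Polynomial.X ^ 2 * Polynomial.derivative (Cpoly (n + 1))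

/-! ### Cayley trees

A Cayley tree of size `n`, rooted at the vertex with label `1`, is encoded by its parent
function on `Fin n` (vertex `v` carries label `v+1`; the root is the vertex with value `0`).
The root is a fixed point and every vertex reaches the root by iterating the parent map. -/

def CayleyTree (n : ℕ) : Type :=
  {p : Fin n → Fin n //
    (∀ v, v.val = 0 → p v = v) ∧ ∀ v : Fin n, ∃ k, k < n ∧ (p^[k] v).val = 0}

noncomputable instance (n : ℕ) : Fintype (CayleyTree n) := by
  unfold CayleyTree; exact Fintype.ofFinite _

namespace CayleyTree

variable {n : ℕ} (T : CayleyTree n)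

/-- `Desc T v a` : `v` is a descendant of `a` (including `a` itself). -/
def Desc (v a : Fin n) : Prop := ∃ k, T.1^[k] v = a

/-- `β_T(a)` : the smallest label among the descendants of `a`, as a 0-based index. -/
def beta (a : Fin n) : ℕ := sInf {j : ℕ | ∃ v : Fin n, v.val = j ∧ T.Desc v a}

/-- The edge from `c` to its parent is improper: `λ(parent c) > β(c)`. -/
def ImproperEdge (c : Fin n) : Prop := c.val ≠ 0 ∧ T.beta c < (T.1 c).val

/-- The number of improper edges. -/
def impe : ℕ := {c : Fin n | T.ImproperEdge c}.ncard

/-- `a` is an improper parent, i.e. `β_T(a) ≠ λ_T(a)`. -/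
def ImproperParent (a : Fin n) : Prop := T.beta a ≠ a.val

/-- The number of improper parents. -/
def impp : ℕ := {a : Fin n | T.ImproperParent a}.ncard

/-- The degree of the root (= its number of children). -/
def degRoot : ℕ := {c : Fin n | c.val ≠ 0 ∧ (T.1 c).val = 0}.ncard

/-- The length of the greater ancestors path of `i` : the largest `k` such that all the
ancestors `p^[l] i`, `l ≤ k`, have a label `≥ λ(i)`. -/
def bapLen (i : Fin n) : ℕ := Nat.findGreatest (fun k => ∀ l ≤ k, i ≤ T.1^[l] i) n

/-- `i` is a leading vertex: `β_T(a_p) = λ_T(i)` where `a_p` is the top of the greater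
ancestors path of `i`. -/
def Leading (i : Fin n) : Prop := T.beta (T.1^[T.bapLen i] i) = i.val

/-- The number of leading vertices. -/
def lead : ℕ := {i : Fin n | T.Leading i}.ncard

end CayleyTree

/-! ### Greg trees

A Greg tree of size `n`, rooted at the vertex with label `1`, has labelled vertices `Fin n`
(vertex `Sum.inl v` carries label `v+1`) and unlabelled vertices `Fin m`, each of degree at
least `3`.  It is encoded by its parent function.  To make the encoding canonical, the
unlabelled vertices are required to be indexed in increasing order of the pair
`(β, depth)` (this pair is distinct for distinct unlabelled vertices, so every abstract Greg
tree admits exactly one such encoding). -/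

/-- The root: the labelled vertex with label `1` (value `0`). -/
def gregRoot {n m : ℕ} (v : Fin n ⊕ Fin m) : Prop := ∃ w : Fin n, w.val = 0 ∧ v = Sum.inl w

namespace GregRaw

variable {n m : ℕ} (p : Fin n ⊕ Fin m → Fin n ⊕ Fin m)

/-- `v` is a descendant of `a` (including `a` itself). -/
def Desc (v a : Fin n ⊕ Fin m) : Prop := ∃ k, p^[k] v = a

/-- `β(a)` : smallest label among the descendants of `a`, as a 0-based index. -/
def beta (a : Fin n ⊕ Fin m) : ℕ :=
  sInf {j : ℕ | ∃ w : Fin n, w.val = j ∧ Desc p (Sum.inl w) a}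

/-- Distance from `v` to the root. -/
def depth (v : Fin n ⊕ Fin m) : ℕ := sInf {k : ℕ | gregRoot (p^[k] v)}

/-- Sorting key for unlabelled vertices: the pair `(β, depth)` encoded as a number. -/
def key (u : Fin m) : ℕ := beta p (Sum.inr u) * (n + m + 1) + depth p (Sum.inr u)

/-- The set of children of a vertex. -/
def children (a : Fin n ⊕ Fin m) : Set (Fin n ⊕ Fin m) := {w | w ≠ a ∧ p w = a}

end GregRaw

/-- The conditions making a parent function on `Fin n ⊕ Fin m` a (canonically encoded)
Greg tree: the root is a fixed point, every vertex reaches the root, every unlabelled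
vertex has at least two children (hence, having also a parent, degree at least `3`),
and unlabelled vertices are indexed in increasing order of `(β, depth)`. -/
def GregCond (n m : ℕ) (p : Fin n ⊕ Fin m → Fin n ⊕ Fin m) : Prop :=
  (∀ v, gregRoot v → p v = v) ∧
  (∀ v, ∃ k, k < n + m ∧ gregRoot (p^[k] v)) ∧
  (∀ u : Fin m, 2 ≤ (GregRaw.children p (Sum.inr u)).ncard) ∧
  (∀ u w : Fin m, u < w ↔ GregRaw.key p u < GregRaw.key p w)

/-- Greg trees of size `n` rooted at `1`.  (The number of unlabelled vertices of a Greg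
tree with `n` labelled vertices is always at most `n`, so the bound `m ≤ n` does not
exclude any Greg tree.) -/
def GregTree (n : ℕ) : Type :=
  Σ m : Fin (n + 1), {p : Fin n ⊕ Fin m.val → Fin n ⊕ Fin m.val // GregCond n m.val p}

noncomputable instance (n : ℕ) : Fintype (GregTree n) := by
  unfold GregTree; exact Fintype.ofFinite _

namespace GregTree

variable {n : ℕ} (T : GregTree n)

/-- The number of unlabelled vertices. -/
def unl : ℕ := T.1.val

/-- `β_T`. -/
def beta (a : Fin n ⊕ Fin T.1.val) : ℕ := GregRaw.beta T.2.1 a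

/-- The labelled vertex `a` is an improper parent, i.e. `β_T(a) ≠ λ_T(a)`. -/
def ImproperParent (a : Fin n) : Prop := T.beta (Sum.inl a) ≠ a.val

/-- The number of improper parents. -/
def impp : ℕ := {a : Fin n | T.ImproperParent a}.ncard

/-- The degree of the root (= its number of children). -/
def degRoot : ℕ :=
  {w : Fin n ⊕ Fin T.1.val | ¬gregRoot w ∧ gregRoot (T.2.1 w)}.ncard

/-- The length of the greater ancestors path of the labelled vertex `i` : the largest `k`
such that all labelled vertices among the ancestors `p^[l] (inl i)`, `l ≤ k`, have a label
`≥ λ(i)`. -/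
def bapLen (i : Fin n) : ℕ :=
  Nat.findGreatest
    (fun k => ∀ l ≤ k, ∀ j : Fin n, T.2.1^[l] (Sum.inl i) = Sum.inl j → i ≤ j)
    (n + T.1.val)

/-- The labelled vertex `i` is a leading vertex. -/
def Leading (i : Fin n) : Prop := T.beta (T.2.1^[T.bapLen i] (Sum.inl i)) = i.val

/-- The number of leading vertices. -/
def lead : ℕ := {i : Fin n | T.Leading i}.ncard

end GregTree

/-! ### Planar trees

A planar tree of size `n` rooted at `1` is encoded by a parent function together with a
rank function giving each non-root vertex its position (from the left, starting at `0`)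
among the children of its parent; ranks of the children of a fixed vertex form an initial
segment of `ℕ`, so the encoding is canonical. -/

def PlanarTree (n : ℕ) : Type :=
  {pr : (Fin n → Fin n) × (Fin n → Fin n) //
    (∀ v, v.val = 0 → pr.1 v = v) ∧
    (∀ v : Fin n, ∃ k, k < n ∧ (pr.1^[k] v).val = 0) ∧
    (∀ v, v.val = 0 → (pr.2 v).val = 0) ∧
    (∀ c d, c.val ≠ 0 → d.val ≠ 0 → pr.1 c = pr.1 d → pr.2 c = pr.2 d → c = d) ∧
    (∀ c, c.val ≠ 0 → ∀ s : Fin n, s < pr.2 c →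
      ∃ d, d.val ≠ 0 ∧ pr.1 d = pr.1 c ∧ pr.2 d = s)}

noncomputable instance (n : ℕ) : Fintype (PlanarTree n) := by
  unfold PlanarTree; exact Fintype.ofFinite _

namespace PlanarTree

variable {n : ℕ} (T : PlanarTree n)

/-- `β_T(a)` : the smallest label among the descendants of `a`, as a 0-based index. -/
def beta (a : Fin n) : ℕ := sInf {j : ℕ | ∃ v : Fin n, v.val = j ∧ ∃ k, T.1.1^[k] v = a}

/-- `j` is elder: it has a brother to its right with a smaller `β`. -/
def Elder (j : Fin n) : Prop :=
  j.val ≠ 0 ∧ ∃ k : Fin n, k.val ≠ 0 ∧ T.1.1 k = T.1.1 j ∧ T.1.2 j < T.1.2 k ∧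
    T.beta k < T.beta j

/-- The number of elder vertices. -/
def eld : ℕ := {j : Fin n | T.Elder j}.ncard

/-- The edge from `c` to its parent is improper: `c` is a younger child and
`λ(parent c) > β(c)`. -/
def ImproperEdge (c : Fin n) : Prop := c.val ≠ 0 ∧ ¬T.Elder c ∧ T.beta c < (T.1.1 c).val

/-- The number of improper edges. -/
def impe : ℕ := {c : Fin n | T.ImproperEdge c}.ncard

/-- `young_T(i)` : the number of younger children of `i`. -/
def young (i : Fin n) : ℕ := {c : Fin n | c.val ≠ 0 ∧ T.1.1 c = i ∧ ¬T.Elder c}.ncard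

/-- `young_T(1)` : the number of younger children of the root. -/
def youngRoot : ℕ := {c : Fin n | c.val ≠ 0 ∧ (T.1.1 c).val = 0 ∧ ¬T.Elder c}.ncard

end PlanarTree

/-!
A tree is encoded by its clades, the sets of labels of the descendants of its vertices; the families
of clades of Greg trees are laminar, and Cayley trees are the Greg trees in which every clade
belongs to a labelled vertex. Contracting each unlabelled vertex of a Greg tree into its child with
the largest `β` yields a Cayley tree `T`. The clades lost on the way are prunings of clades of `T`:
a pruning of the clade of `d` removes the branches at `d` whose `β` is at most that of a given
branch, and it contains `d`, so the prunings correspond to the improper edges of `T`. Conversely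
any set of prunings can be added back to `T`, so the Greg trees contracting to `T` form a Boolean
lattice over its improper edges. For each improper parent `a` of `T` exactly one pruning has
smallest label `a`, and `a` stops being an improper parent precisely when this pruning is added.
Hence this pruning contributes a factor `y + t` and every other one a factor `y + 1`.
-/

section Hierarchy

open Finset

variable {α : Type*}

/-- The laminarity relation between two clades of a rooted tree. -/
def NestedOrDisjoint (A B : Finset α) : Prop := A ⊆ B ∨ B ⊆ A ∨ Disjoint A B

namespace NestedOrDisjoint

variable {A B : Finset α} {x y : α}

lemma symm (h : NestedOrDisjoint A B) : NestedOrDisjoint B A := by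
  rcases h with h | h | h
  exacts [.inr (.inl h), .inl h, .inr (.inr h.symm)]

lemma subset_or_subset (h : NestedOrDisjoint A B) (hA : x ∈ A) (hB : x ∈ B) : A ⊆ B ∨ B ⊆ A := by
  rcases h with h | h | h
  exacts [.inl h, .inr h, (disjoint_left.1 h hA hB).elim]

lemma ssubset (h : NestedOrDisjoint A B) (hxA : x ∈ A) (hxB : x ∈ B) (hyB : y ∈ B)
    (hyA : y ∉ A) : A ⊂ B :=
  ((h.subset_or_subset hxA hxB).resolve_right fun hBA => hyA (hBA hyB)).ssubset_of_not_subset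
    fun hBA => hyA (hBA hyB)

end NestedOrDisjoint

/-- The number of members of `F` strictly containing `A`: the depth of the vertex with clade `A`. -/
def cladeDepth [DecidableEq α] (F : Finset (Finset α)) (A : Finset α) : ℕ := #{B ∈ F | A ⊂ B}

lemma cladeDepth_lt_card [DecidableEq α] {F : Finset (Finset α)} {A : Finset α} (hA : A ∈ F) :
    cladeDepth F A < #F :=
  card_lt_card (filter_ssubset.2 ⟨A, hA, ssubset_irrefl A⟩)

lemma cladeDepth_lt_cladeDepth [DecidableEq α] {F : Finset (Finset α)} {A B : Finset α}
    (hB : B ∈ F) (hAB : A ⊂ B) : cladeDepth F B < cladeDepth F A :=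
  card_lt_card ⟨monotone_filter_right F fun _ _ hBC => hAB.trans hBC, fun hsub =>
    ssubset_irrefl B (mem_filter.1 (hsub (mem_filter.2 ⟨hB, hAB⟩))).2⟩

variable [Fintype α]

/-- A hierarchy on a finite set of labels: a laminar family of nonempty clades that contains the
set of all labels. -/
structure IsHierarchy (F : Finset (Finset α)) : Prop where
  nonempty : ∀ A ∈ F, A.Nonempty
  univ_mem : univ ∈ F
  nestedOrDisjoint : ∀ A ∈ F, ∀ B ∈ F, NestedOrDisjoint A B

lemma IsHierarchy.subset_or_subset {F : Finset (Finset α)} (hF : IsHierarchy F) {A B : Finset α}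
    {x : α} (hA : A ∈ F) (hB : B ∈ F) (hxA : x ∈ A) (hxB : x ∈ B) : A ⊆ B ∨ B ⊆ A :=
  (hF.nestedOrDisjoint A hA B hB).subset_or_subset hxA hxB

/-- The families of clades of the Greg trees rooted at `⊥`: only the root clade contains `⊥`, and
distinct labels sit at distinct vertices. -/
structure IsGregFamily [Bot α] (F : Finset (Finset α)) : Prop extends IsHierarchy F where
  eq_univ_of_bot_mem : ∀ A ∈ F, ⊥ ∈ A → A = univ
  separation : ∀ a b, (∀ A ∈ F, a ∈ A ↔ b ∈ A) → a = b

variable [DecidableEq α] {F G : Finset (Finset α)} {A B C P : Finset α} {a b x : α}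

/-- The smallest member of `F` containing `a`: the clade of the vertex labelled `a`. -/
def minClade (F : Finset (Finset α)) (a : α) : Finset α := (F.filter (a ∈ ·)).inf id

/-- The smallest member of `F` strictly containing `A`. An empty infimum is `univ`, so the parent
of `univ` is `univ`, just as the root of an encoded tree is a fixed point of its parent map. -/
def parentClade (F : Finset (Finset α)) (A : Finset α) : Finset α := (F.filter (A ⊂ ·)).inf id

lemma mem_minClade : a ∈ minClade F a := by
  simp [minClade, mem_inf]

lemma minClade_subset (hA : A ∈ F) (ha : a ∈ A) : minClade F a ⊆ A :=
  inf_le (f := id) (mem_filter.2 ⟨hA, ha⟩)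

lemma subset_parentClade : A ⊆ parentClade F A :=
  Finset.le_inf fun _ hB => (mem_filter.1 hB).2.subset

lemma parentClade_subset (hB : B ∈ F) (h : A ⊂ B) : parentClade F A ⊆ B :=
  inf_le (f := id) (mem_filter.2 ⟨hB, h⟩)

lemma parentClade_univ : parentClade F univ = univ := by
  rw [parentClade, filter_false_of_mem fun B _ => (subset_univ B).not_ssuperset]
  rfl

lemma inf_id_mem_of_chain (huniv : univ ∈ F) (hF : ∀ A ∈ F, ∀ B ∈ F, A ⊆ B ∨ B ⊆ A) :
    F.inf id ∈ F := by
  refine inf_mem (F : Set (Finset α)) huniv (fun A hA B hB => ?_) F id fun A hA => hA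
  rcases hF A hA B hB with h | h
  · rwa [inf_eq_left.2 h]
  · rwa [inf_eq_right.2 h]

namespace IsHierarchy

lemma minClade_mem (hF : IsHierarchy F) (a : α) : minClade F a ∈ F := by
  refine (mem_filter.1 (inf_id_mem_of_chain (F := F.filter (a ∈ ·)) ?_ fun A hA B hB => ?_)).1
  · exact mem_filter.2 ⟨hF.univ_mem, mem_univ a⟩
  · rw [mem_filter] at hA hB
    exact hF.subset_or_subset hA.1 hB.1 hA.2 hB.2

lemma parentClade_mem_filter (hF : IsHierarchy F) (hA : A.Nonempty) (hAu : A ≠ univ) :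
    parentClade F A ∈ F.filter (A ⊂ ·) := by
  obtain ⟨a, ha⟩ := hA
  refine inf_id_mem_of_chain (mem_filter.2 ⟨hF.univ_mem, A.subset_univ.ssubset_of_ne hAu⟩)
    fun B hB C hC => ?_
  rw [mem_filter] at hB hC
  exact hF.subset_or_subset hB.1 hC.1 (hB.2.subset ha) (hC.2.subset ha)

lemma ssubset_parentClade (hF : IsHierarchy F) (hA : A.Nonempty) (hAu : A ≠ univ) :
    A ⊂ parentClade F A :=
  (mem_filter.1 (hF.parentClade_mem_filter hA hAu)).2

lemma parentClade_mem (hF : IsHierarchy F) (hA : A.Nonempty) : parentClade F A ∈ F := by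
  rcases eq_or_ne A univ with rfl | hAu
  · simpa only [parentClade_univ] using hF.univ_mem
  · exact (mem_filter.1 (hF.parentClade_mem_filter hA hAu)).1

lemma exists_child (hF : IsHierarchy F) (hB : B ∈ F) (hP : P ∈ F) (hBP : B ⊂ P) :
    ∃ C ∈ F, B ⊆ C ∧ C ⊂ P ∧ parentClade F C = P := by
  obtain ⟨C, hBC, hC⟩ := exists_le_maximal (F.filter (· ⊂ P)) (mem_filter.2 ⟨hB, hBP⟩)
  obtain ⟨hCF, hCP⟩ := mem_filter.1 hC.prop
  have hCu : C ≠ univ := fun h => (h ▸ hCP).not_subset P.subset_univ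
  refine ⟨C, hCF, hBC, hCP, (parentClade_subset hP hCP).eq_of_not_ssubset fun h => ?_⟩
  exact hC.not_gt (mem_filter.2 ⟨hF.parentClade_mem (hF.nonempty C hCF), h⟩)
    (hF.ssubset_parentClade (hF.nonempty C hCF) hCu)

lemma subset_of_ssubset_parentClade (hF : IsHierarchy F) (hB : B ∈ F) (hC : C ∈ F)
    (hBC : B ⊂ parentClade F C) (hxB : x ∈ B) (hxC : x ∈ C) : B ⊆ C := by
  rcases hF.subset_or_subset hB hC hxB hxC with h | h
  · exact h
  · by_contra hne
    exact hBC.not_subset (parentClade_subset hB (h.ssubset_of_not_subset hne))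

lemma eq_of_parentClade_eq (hF : IsHierarchy F) (hB : B ∈ F) (hC : C ∈ F) (hBu : B ≠ univ)
    (hCu : C ≠ univ) (h : parentClade F B = parentClade F C) (hxB : x ∈ B) (hxC : x ∈ C) :
    B = C :=
  (hF.subset_of_ssubset_parentClade hB hC (h ▸ hF.ssubset_parentClade ⟨x, hxB⟩ hBu) hxB
    hxC).antisymm
    (hF.subset_of_ssubset_parentClade hC hB (h ▸ hF.ssubset_parentClade ⟨x, hxC⟩ hCu) hxC hxB)

lemma cladeDepth_eq_succ (hF : IsHierarchy F) (hA : A.Nonempty) (hAu : A ≠ univ) :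
    cladeDepth F A = cladeDepth F (parentClade F A) + 1 := by
  have hlt := hF.ssubset_parentClade hA hAu
  have hfilter : {B ∈ F | A ⊂ B} = cons (parentClade F A) {B ∈ F | parentClade F A ⊂ B}
      (by simp) := by
    ext B
    rw [mem_cons, mem_filter, mem_filter]
    constructor
    · rintro ⟨hB, hAB⟩
      exact (parentClade_subset hB hAB).eq_or_ssubset.imp Eq.symm fun h => ⟨hB, h⟩
    · rintro (rfl | ⟨hB, h⟩)
      · exact ⟨hF.parentClade_mem hA, hlt⟩
      · exact ⟨hB, hlt.trans h⟩
  rw [cladeDepth, hfilter, card_cons]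
  rfl

lemma cladeDepth_eq_zero_iff (hF : IsHierarchy F) : cladeDepth F A = 0 ↔ A = univ := by
  rw [cladeDepth, card_eq_zero, filter_eq_empty_iff]
  constructor
  · intro h
    by_contra hAu
    exact h hF.univ_mem (A.subset_univ.ssubset_of_ne hAu)
  · rintro rfl B -
    exact B.subset_univ.not_ssuperset

end IsHierarchy

lemma IsGregFamily.minClade_injective [Bot α] (hF : IsGregFamily F) :
    Injective (minClade F) := fun a b hab =>
  hF.separation a b fun _ hA =>
    ⟨fun ha => minClade_subset hA ha (hab ▸ mem_minClade),
      fun hb => minClade_subset hA hb (hab ▸ mem_minClade)⟩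

lemma IsGregFamily.minClade_bot [Bot α] (hF : IsGregFamily F) : minClade F ⊥ = univ :=
  hF.eq_univ_of_bot_mem _ (hF.minClade_mem ⊥) mem_minClade

end Hierarchy

section CayleyFamily

open Finset

variable {α : Type*} [Fintype α] [DecidableEq α]

/-- The families of clades of the Cayley trees rooted at `⊥`: every clade is the clade of a
labelled vertex. -/
structure IsCayleyFamily [Bot α] (F : Finset (Finset α)) : Prop extends IsGregFamily F where
  exists_minClade_eq : ∀ A ∈ F, ∃ a, minClade F a = A

lemma IsCayleyFamily.card_eq [Bot α] {T : Finset (Finset α)} (hT : IsCayleyFamily T) :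
    #T = Fintype.card α := by
  have himage : T = univ.image (minClade T) := by
    ext A
    simp only [mem_image, mem_univ, true_and]
    exact ⟨hT.exists_minClade_eq A, fun ⟨a, ha⟩ => ha ▸ hT.minClade_mem a⟩
  rw [himage, card_image_of_injective _ hT.minClade_injective, card_univ]

end CayleyFamily

section Pruning

open Finset

variable {α : Type*} [LinearOrder α] {F T : Finset (Finset α)} {A B P Q : Finset α}

lemma min_ne_min_of_disjoint (hA : A.Nonempty) (h : Disjoint A B) : A.min ≠ B.min := by
  obtain ⟨a, ha⟩ := min_of_nonempty hA
  intro hAB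
  exact disjoint_left.1 h (mem_of_min ha) (mem_of_min (hAB ▸ ha))

/-- `A` is obtained from the clade `P` by removing sub-branches whose smallest labels are all
smaller than that of `A`. These are the clades of the unlabelled vertices which, when every
unlabelled vertex is contracted into its child with the largest `β`, are absorbed into the vertex
with clade `P`. -/
structure IsPruning (T : Finset (Finset α)) (A P : Finset α) : Prop where
  mem : P ∈ T
  ssubset : A ⊂ P
  exists_min_lt : ∀ x ∈ P, x ∉ A → ∃ B ∈ T, x ∈ B ∧ Disjoint A B ∧ B.min < A.min

/-- `A` is a pruning of some member of `T`. -/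
def IsPruned (T : Finset (Finset α)) (A : Finset α) : Prop := ∃ P, IsPruning T A P

lemma IsPruned.mono (hTF : T ⊆ F) (hA : IsPruned T A) : IsPruned F A := by
  obtain ⟨P, hP⟩ := hA
  refine ⟨P, hTF hP.mem, hP.ssubset, fun x hxP hxA => ?_⟩
  obtain ⟨B, hB, h⟩ := hP.exists_min_lt x hxP hxA
  exact ⟨B, hTF hB, h⟩

open Classical in
/-- The family that remains of the clades of a Greg tree after every unlabelled vertex has been
contracted into its child with the largest `β`. -/
def core (F : Finset (Finset α)) : Finset (Finset α) := F.filter (¬IsPruned F ·)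

lemma mem_core : A ∈ core F ↔ A ∈ F ∧ ¬IsPruned F A := by
  simp only [core, mem_filter]

lemma core_subset : core F ⊆ F := fun _ hA => (mem_core.1 hA).1

lemma IsPruning.min_lt_min (hB : IsPruning T B P) (hA : ∀ C ∈ T, NestedOrDisjoint A C)
    (hAP : A ⊆ P) {d : α} (hdA : d ∈ A) (hdB : d ∈ B) (hAB : ¬A ⊆ B) : A.min < B.min := by
  obtain ⟨x, hxA, hxB⟩ := not_subset.1 hAB
  obtain ⟨C, hC, hxC, hBC, hCmin⟩ := hB.exists_min_lt x (hAP hxA) hxB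
  have hCA : C ⊂ A := (hA C hC).symm.ssubset hxC hxA hdA (disjoint_left.1 hBC hdB)
  exact (min_mono hCA.subset).trans_lt hCmin

lemma IsPruning.bot_notMem [OrderBot α] (h : IsPruning T A P) : ⊥ ∉ A := by
  intro hbot
  obtain ⟨x, hxP, hxA⟩ := exists_of_ssubset h.ssubset
  obtain ⟨B, -, -, -, hBmin⟩ := h.exists_min_lt x hxP hxA
  exact hBmin.not_ge ((min_le hbot).trans (Finset.le_min fun _ _ => WithTop.coe_le_coe.2 bot_le))

variable [Fintype α]

lemma IsPruning.mem_of_minClade {d : α} (h : IsPruning T A (minClade T d)) (hA : A.Nonempty) :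
    d ∈ A := by
  by_contra hdA
  obtain ⟨B, hB, hdB, hdisj, -⟩ := h.exists_min_lt d mem_minClade hdA
  obtain ⟨z, hz⟩ := hA
  exact disjoint_left.1 hdisj hz (minClade_subset hB hdB (h.ssubset.subset hz))

lemma IsPruning.subset_of_subset [Bot α] (hT : IsCayleyFamily T) (h : IsPruning T A P)
    (hA : A.Nonempty) (hQ : Q ∈ T) (hAQ : A ⊆ Q) : P ⊆ Q := by
  obtain ⟨d, rfl⟩ := hT.exists_minClade_eq P h.mem
  exact minClade_subset hQ (hAQ (h.mem_of_minClade hA))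

lemma not_isPruned_of_mem [Bot α] (hT : IsCayleyFamily T) (hF : IsHierarchy F) (hTF : T ⊆ F)
    (hpruned : ∀ B ∈ F, B ∉ T → IsPruned T B) (hA : A ∈ T) : ¬IsPruned F A := by
  rintro ⟨P, hP⟩
  obtain ⟨a, haA⟩ := hT.nonempty A hA
  have hAu : A ≠ univ := fun h => (h ▸ hP.ssubset).not_subset P.subset_univ
  have hAD : A ⊂ parentClade T A := hT.ssubset_parentClade ⟨a, haA⟩ hAu
  have hDT : parentClade T A ∈ T := hT.parentClade_mem ⟨a, haA⟩
  obtain ⟨d, hd⟩ := hT.exists_minClade_eq _ hDT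
  have hdD : d ∈ parentClade T A := hd ▸ mem_minClade
  have hdA : d ∉ A := fun h => hAD.not_subset (hd ▸ minClade_subset hA h)
  have haD : a ∈ parentClade T A := hAD.subset haA
  by_cases hdP : d ∈ P
  · obtain ⟨B, hB, hdB, hAB, hBmin⟩ := hP.exists_min_lt d hdP hdA
    have haB : a ∉ B := disjoint_left.1 hAB haA
    have hBT : B ∉ T := fun h => haB (minClade_subset h hdB (hd ▸ haD))
    have hBD : B ⊆ parentClade T A :=
      ((hF.nestedOrDisjoint B hB _ (hTF hDT)).ssubset hdB hdD haD haB).subset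
    obtain ⟨E, hE⟩ := hpruned B hB hBT
    have hED : E = parentClade T A :=
      (hE.subset_of_subset hT ⟨d, hdB⟩ hDT hBD).antisymm
        (hd ▸ minClade_subset hE.mem (hE.ssubset.subset hdB))
    obtain ⟨C, hC, haC, hBC, hCmin⟩ := hE.exists_min_lt a (hED ▸ haD) haB
    have hCD : C ⊂ parentClade T A :=
      (hT.nestedOrDisjoint C hC _ hDT).ssubset haC haD hdD (disjoint_left.1 hBC hdB)
    have hCA : C ⊆ A := hT.subset_of_ssubset_parentClade hC hA hCD haC haA
    exact ((min_mono hCA).trans_lt (hCmin.trans hBmin)).false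
  · have hPT : P ∉ T := fun h => hdP (parentClade_subset h hP.ssubset hdD)
    have hPD : P ⊆ parentClade T A := ((hF.nestedOrDisjoint P hP.mem _ (hTF hDT)).ssubset
      (hP.ssubset.subset haA) haD hdD hdP).subset
    obtain ⟨E, hE⟩ := hpruned P hP.mem hPT
    have haP : P.Nonempty := ⟨a, hP.ssubset.subset haA⟩
    have hED : E = minClade T d := hd ▸ (hE.subset_of_subset hT haP hDT hPD).antisymm
      (parentClade_subset hE.mem (hP.ssubset.trans hE.ssubset))
    exact hdP ((hED ▸ hE).mem_of_minClade haP)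

lemma IsHierarchy.isHierarchy_core (hF : IsHierarchy F) : IsHierarchy (core F) where
  nonempty A hA := hF.nonempty A (core_subset hA)
  univ_mem := mem_core.2 ⟨hF.univ_mem, fun ⟨P, hP⟩ => hP.ssubset.not_subset P.subset_univ⟩
  nestedOrDisjoint A hA B hB := hF.nestedOrDisjoint A (core_subset hA) B (core_subset hB)

lemma IsHierarchy.isPruning_of_forall_between (hF : IsHierarchy F) (hP : P ∈ F) (hA : A ∈ F)
    (hAP : A ⊂ P) (hpruned : ∀ B ∈ F, A ⊆ B → B ⊂ P → IsPruned F B) : IsPruning F A P := by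
  induction A using WellFoundedGT.induction with
  | ind A ih =>
    obtain ⟨Q, hQ⟩ := hpruned A hA subset_rfl hAP
    obtain ⟨a, ha⟩ := hF.nonempty A hA
    refine ⟨hP, hAP, fun x hxP hxA => ?_⟩
    by_cases hxQ : x ∈ Q
    · exact hQ.exists_min_lt x hxQ hxA
    · have hQP : Q ⊂ P := (hF.nestedOrDisjoint Q hQ.mem P hP).ssubset (hQ.ssubset.subset ha)
        (hAP.subset ha) hxP hxQ
      obtain ⟨B, hB, hxB, hQB, hBmin⟩ := (ih Q hQ.ssubset hQ.mem hQP fun B hB hQB =>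
        hpruned B hB (hQ.ssubset.subset.trans hQB)).exists_min_lt x hxP hxQ
      exact ⟨B, hB, hxB, disjoint_of_subset_left hQ.ssubset.subset hQB,
        hBmin.trans_le (min_mono hQ.ssubset.subset)⟩

lemma IsHierarchy.isPruning_parentClade_core (hF : IsHierarchy F) (hA : A ∈ F)
    (hAcore : A ∉ core F) (hB : B ∈ F) (hAB : A ⊆ B) (hBP : B ⊂ parentClade (core F) A) :
    IsPruning F B (parentClade (core F) A) := by
  have hP := core_subset (hF.isHierarchy_core.parentClade_mem (hF.nonempty A hA))
  refine hF.isPruning_of_forall_between hP hB hBP fun C hC hBC hCP => ?_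
  by_contra hCpruned
  have hCcore : C ∈ core F := mem_core.2 ⟨hC, hCpruned⟩
  have hAC : A ⊂ C := (hAB.trans hBC).ssubset_of_ne fun h => hAcore (h ▸ hCcore)
  exact hCP.not_subset (parentClade_subset hCcore hAC)

lemma IsHierarchy.isPruned_core (hF : IsHierarchy F) (hA : A ∈ F) (hAcore : A ∉ core F) :
    IsPruned (core F) A := by
  set P := parentClade (core F) A
  have hAu : A ≠ univ := fun h => hAcore (h ▸ hF.isHierarchy_core.univ_mem)
  have hAP : A ⊂ P := hF.isHierarchy_core.ssubset_parentClade (hF.nonempty A hA) hAu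
  have hPF : P ∈ F := core_subset (hF.isHierarchy_core.parentClade_mem (hF.nonempty A hA))
  have hprune {C : Finset α} (hC : C ∈ F) (hAC : A ⊆ C) (hCP : C ⊂ P) : IsPruning F C P :=
    hF.isPruning_parentClade_core hA hAcore hC hAC hCP
  obtain ⟨a, ha⟩ := hF.nonempty A hA
  refine ⟨P, hF.isHierarchy_core.parentClade_mem ⟨a, ha⟩, hAP, fun x hxP hxA => ?_⟩
  -- A maximal removed branch of `F` through `x` is not itself pruned, so it survives in `core F`.
  obtain ⟨B₀, hB₀, hB₀x⟩ := (hprune hA subset_rfl hAP).exists_min_lt x hxP hxA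
  obtain ⟨B, -, hBmax⟩ := exists_le_maximal
    (F.filter fun B => x ∈ B ∧ Disjoint A B ∧ B.min < A.min) (mem_filter.2 ⟨hB₀, hB₀x⟩)
  obtain ⟨hB, hxB, hAB, hBmin⟩ := mem_filter.1 hBmax.prop
  have haB : a ∉ B := disjoint_left.1 hAB ha
  refine ⟨B, mem_core.2 ⟨hB, ?_⟩, hxB, hAB, hBmin⟩
  rintro ⟨Q, hQ⟩
  have hAQ : A ⊆ Q := by
    rcases hF.nestedOrDisjoint A hA Q hQ.mem with h | h | h
    · exact h
    · exact (hxA (h (hQ.ssubset.subset hxB))).elim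
    · exact (hBmax.not_gt (mem_filter.2 ⟨hQ.mem, hQ.ssubset.subset hxB, h,
        (min_mono hQ.ssubset.subset).trans_lt hBmin⟩) hQ.ssubset).elim
  obtain ⟨C, hC, haC, hBC, hCmin⟩ := hQ.exists_min_lt a (hAQ ha) haB
  have hAC : A ⊆ C := (hF.subset_or_subset hA hC ha haC).resolve_right fun h =>
    ((min_mono h).trans_lt (hCmin.trans hBmin)).false
  have hxC : x ∉ C := disjoint_left.1 hBC hxB
  have hCP : C ⊂ P := (hF.nestedOrDisjoint C hC P hPF).ssubset haC (hAP.subset ha) hxP hxC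
  obtain ⟨D, hD, hxD, hCD, hDmin⟩ := (hprune hC hAC hCP).exists_min_lt x hxP hxC
  have hBD : ¬D ⊆ B := fun h => ((min_mono h).trans_lt (hDmin.trans hCmin)).false
  exact hBmax.not_gt (mem_filter.2 ⟨hD, hxD, disjoint_of_subset_left hAC hCD,
    hDmin.trans (hCmin.trans hBmin)⟩)
    (((hF.subset_or_subset hB hD hxB hxD).resolve_right hBD).ssubset_of_not_subset hBD)

lemma IsHierarchy.exists_isPruning_child (hF : IsHierarchy F) (hA : A ∈ F)
    (hunlabelled : ∀ a, minClade F a ≠ A) :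
    ∃ D ∈ F, parentClade F D = A ∧ IsPruning F D A := by
  have hchild : ∀ x ∈ A, ∃ C ∈ F.filter fun C => C ⊂ A ∧ parentClade F C = A, x ∈ C := by
    intro x hx
    obtain ⟨C, hC, hxC, hCA⟩ := hF.exists_child (hF.minClade_mem x) hA
      ((minClade_subset hA hx).ssubset_of_ne (hunlabelled x))
    exact ⟨C, mem_filter.2 ⟨hC, hCA⟩, hxC mem_minClade⟩
  obtain ⟨a, ha⟩ := hF.nonempty A hA
  obtain ⟨C₀, hC₀, -⟩ := hchild a ha
  obtain ⟨D, hD, hDmax⟩ := exists_max_image _ Finset.min ⟨C₀, hC₀⟩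
  obtain ⟨hDF, hDA, hDparent⟩ := mem_filter.1 hD
  refine ⟨D, hDF, hDparent, hA, hDA, fun x hxA hxD => ?_⟩
  obtain ⟨C, hC, hxC⟩ := hchild x hxA
  obtain ⟨hCF, hCA, hCparent⟩ := mem_filter.1 hC
  have hDC : Disjoint D C := disjoint_left.2 fun y hyD hyC => hxD <| by
    rwa [hF.eq_of_parentClade_eq hDF hCF (fun h => (h ▸ hDA).not_subset A.subset_univ)
      (fun h => (h ▸ hCA).not_subset A.subset_univ) (hDparent.trans hCparent.symm) hyD hyC]
  exact ⟨C, hCF, hxC, hDC, (hDmax C hC).lt_of_ne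
    (min_ne_min_of_disjoint (hF.nonempty D hDF) hDC).symm⟩

lemma IsHierarchy.exists_forall_isPruned (hF : IsHierarchy F) (hA : A ∈ F) :
    ∃ a ∈ A, ∀ B ∈ F, a ∈ B → B ⊂ A → IsPruned F B := by
  induction A using Finset.strongInduction with
  | H A ih =>
    by_cases hlabelled : ∃ a, minClade F a = A
    · obtain ⟨a, rfl⟩ := hlabelled
      exact ⟨a, mem_minClade, fun B hB haB hBA =>
        (hBA.not_subset (minClade_subset hB haB)).elim⟩
    · obtain ⟨D, hD, hDparent, hDA⟩ :=
        hF.exists_isPruning_child hA (not_exists.1 hlabelled)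
      obtain ⟨a, haD, ha⟩ := ih D hDA.ssubset hD
      refine ⟨a, hDA.ssubset.subset haD, fun B hB haB hBA => ?_⟩
      have hBD : B ⊆ D := hF.subset_of_ssubset_parentClade hB hD (hDparent ▸ hBA) haB haD
      rcases hBD.eq_or_ssubset with rfl | hBD
      · exact ⟨A, hDA⟩
      · exact ha B hB haB hBD

lemma IsHierarchy.mem_of_forall_core (hF : IsHierarchy F) {a b : α}
    (hab : ∀ B ∈ core F, a ∈ B ↔ b ∈ B) (hA : A ∈ F) (ha : a ∈ A) : b ∈ A := by
  by_cases hAcore : A ∈ core F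
  · exact (hab A hAcore).1 ha
  · by_contra hb
    obtain ⟨P, hP⟩ := hF.isPruned_core hA hAcore
    obtain ⟨B, hB, hbB, hAB, -⟩ :=
      hP.exists_min_lt b ((hab P hP.mem).1 (hP.ssubset.subset ha)) hb
    exact disjoint_left.1 hAB ha ((hab B hB).2 hbB)

lemma IsGregFamily.isCayleyFamily_core [Bot α] (hF : IsGregFamily F) : IsCayleyFamily (core F) where
  toIsHierarchy := hF.isHierarchy_core
  eq_univ_of_bot_mem A hA := hF.eq_univ_of_bot_mem A (core_subset hA)
  separation a b hab := hF.separation a b fun A hA =>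
    ⟨hF.mem_of_forall_core hab hA, hF.mem_of_forall_core (fun B hB => (hab B hB).symm) hA⟩
  exists_minClade_eq A hA := by
    obtain ⟨hAF, -⟩ := mem_core.1 hA
    obtain ⟨a, haA, ha⟩ := hF.exists_forall_isPruned hAF
    have hmin := mem_core.1 (hF.isHierarchy_core.minClade_mem a)
    refine ⟨a, (minClade_subset hA haA).eq_of_not_ssubset fun h => ?_⟩
    exact hmin.2 (ha _ hmin.1 mem_minClade h)

open Classical in
/-- The sets which, added to the clades of a Cayley tree `T`, give the clades of the Greg trees
that contract to `T`. -/
def prunings (T : Finset (Finset α)) : Finset (Finset α) :=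
  univ.filter fun A => A ∉ T ∧ A.Nonempty ∧ (∀ B ∈ T, NestedOrDisjoint A B) ∧ IsPruned T A

lemma mem_prunings : A ∈ prunings T ↔
    A ∉ T ∧ A.Nonempty ∧ (∀ B ∈ T, NestedOrDisjoint A B) ∧ IsPruned T A := by
  simp only [prunings, mem_filter, mem_univ, true_and]

lemma IsHierarchy.sdiff_core_subset_prunings (hF : IsHierarchy F) :
    F \ core F ⊆ prunings (core F) := by
  intro A hA
  obtain ⟨hAF, hAcore⟩ := mem_sdiff.1 hA
  exact mem_prunings.2 ⟨hAcore, hF.nonempty A hAF,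
    fun B hB => hF.nestedOrDisjoint A hAF B (core_subset hB), hF.isPruned_core hAF hAcore⟩

lemma nestedOrDisjoint_of_isPruning_of_ssubset [Bot α] (hT : IsCayleyFamily T)
    (hB : ∀ C ∈ T, NestedOrDisjoint B C) (hBne : B.Nonempty) (hAP : IsPruning T A P)
    (hBQ : IsPruning T B Q) (hPQ : P ⊂ Q) : NestedOrDisjoint A B := by
  rcases hB P hAP.mem with h | h | h
  · exact (hPQ.not_subset (hBQ.subset_of_subset hT hBne hAP.mem h)).elim
  · exact .inl (hAP.ssubset.subset.trans h)
  · exact .inr (.inr (disjoint_of_subset_left hAP.ssubset.subset h.symm))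

lemma nestedOrDisjoint_of_mem_prunings [Bot α] (hT : IsCayleyFamily T)
    (hA : A ∈ prunings T) (hB : B ∈ prunings T) : NestedOrDisjoint A B := by
  obtain ⟨-, hAne, hAT, P, hAP⟩ := mem_prunings.1 hA
  obtain ⟨-, hBne, hBT, Q, hBQ⟩ := mem_prunings.1 hB
  rcases eq_or_ne P Q with rfl | hPQ
  · obtain ⟨d, rfl⟩ := hT.exists_minClade_eq P hAP.mem
    have hdA := hAP.mem_of_minClade hAne
    have hdB := hBQ.mem_of_minClade hBne
    by_contra hAB
    have hA_lt := hBQ.min_lt_min hAT hAP.ssubset.subset hdA hdB fun h => hAB (.inl h)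
    have hB_lt := hAP.min_lt_min hBT hBQ.ssubset.subset hdB hdA fun h => hAB (.inr (.inl h))
    exact hA_lt.asymm hB_lt
  · rcases hT.nestedOrDisjoint P hAP.mem Q hBQ.mem with h | h | h
    · exact nestedOrDisjoint_of_isPruning_of_ssubset hT hBT hBne hAP hBQ (h.ssubset_of_ne hPQ)
    · exact (nestedOrDisjoint_of_isPruning_of_ssubset hT hAT hAne hBQ hAP
        (h.ssubset_of_ne hPQ.symm)).symm
    · exact .inr (.inr (disjoint_of_subset_left hAP.ssubset.subset
        (disjoint_of_subset_right hBQ.ssubset.subset h)))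

section Fibre

variable [OrderBot α] {S : Finset (Finset α)}

lemma IsCayleyFamily.isGregFamily_union (hT : IsCayleyFamily T) (hS : S ⊆ prunings T) :
    IsGregFamily (T ∪ S) where
  nonempty A hA := by
    rcases mem_union.1 hA with h | h
    · exact hT.nonempty A h
    · exact (mem_prunings.1 (hS h)).2.1
  univ_mem := mem_union_left _ hT.univ_mem
  nestedOrDisjoint A hA B hB := by
    rcases mem_union.1 hA with hA | hA <;> rcases mem_union.1 hB with hB | hB
    · exact hT.nestedOrDisjoint A hA B hB
    · exact ((mem_prunings.1 (hS hB)).2.2.1 A hA).symm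
    · exact (mem_prunings.1 (hS hA)).2.2.1 B hB
    · exact nestedOrDisjoint_of_mem_prunings hT (hS hA) (hS hB)
  eq_univ_of_bot_mem A hA hbot := by
    rcases mem_union.1 hA with h | h
    · exact hT.eq_univ_of_bot_mem A h hbot
    · obtain ⟨P, hP⟩ := (mem_prunings.1 (hS h)).2.2.2
      exact (hP.bot_notMem hbot).elim
  separation a b hab := hT.separation a b fun A hA => hab A (mem_union_left _ hA)

lemma IsCayleyFamily.core_union (hT : IsCayleyFamily T) (hS : S ⊆ prunings T) :
    core (T ∪ S) = T := by
  have hpruned : ∀ B ∈ T ∪ S, B ∉ T → IsPruned T B := fun B hB hBT =>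
    (mem_prunings.1 (hS ((mem_union.1 hB).resolve_left hBT))).2.2.2
  ext A
  rw [mem_core]
  constructor
  · rintro ⟨hA, hnot⟩
    by_contra hAT
    exact hnot ((hpruned A hA hAT).mono subset_union_left)
  · intro hA
    exact ⟨mem_union_left _ hA, not_isPruned_of_mem hT (hT.isGregFamily_union hS).toIsHierarchy
      subset_union_left hpruned hA⟩

end Fibre

/-- The labels `a` of the improper parents: no clade has smallest label `a`. -/
def improperLabels (F : Finset (Finset α)) : Finset α := univ.filter fun a => ∀ A ∈ F, A.min ≠ a

lemma mem_improperLabels {a : α} : a ∈ improperLabels F ↔ ∀ A ∈ F, A.min ≠ a := by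
  simp only [improperLabels, mem_filter, mem_univ, true_and]

lemma IsHierarchy.mem_improperLabels_iff_min_minClade (hF : IsHierarchy F) {a : α} :
    a ∈ improperLabels F ↔ (minClade F a).min ≠ a := by
  rw [mem_improperLabels]
  refine ⟨fun h => h _ (hF.minClade_mem a), fun h A hA hmin => h ?_⟩
  exact (min_le mem_minClade).antisymm
    (hmin ▸ min_mono (minClade_subset hA (mem_of_min hmin)))

/-- The clades of the children whose edge to their parent, labelled `d`, is improper. -/
def improperMembers (T : Finset (Finset α)) : Finset (Finset α) :=
  T.filter fun B => ∃ d : α, minClade T d = parentClade T B ∧ B.min < d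

lemma mem_improperMembers : B ∈ improperMembers T ↔
    B ∈ T ∧ ∃ d : α, minClade T d = parentClade T B ∧ B.min < d :=
  mem_filter

/-- The clade `P` without the members of `T` strictly below `P` whose smallest label is at
most `k`. -/
def prune (T : Finset (Finset α)) (P : Finset α) (k : WithTop α) : Finset α :=
  P.filter fun x => ∀ C ∈ T, C ⊂ P → x ∈ C → k < C.min

section Prune

variable {C : Finset α} {k : WithTop α} {a d x : α}

lemma mem_prune : x ∈ prune T P k ↔ x ∈ P ∧ ∀ C ∈ T, C ⊂ P → x ∈ C → k < C.min :=
  mem_filter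

lemma prune_subset : prune T P k ⊆ P := filter_subset _ _

lemma disjoint_prune (hC : C ∈ T) (hCP : C ⊂ P) (hk : C.min ≤ k) : Disjoint (prune T P k) C :=
  disjoint_left.2 fun _ hx hxC => ((mem_prune.1 hx).2 C hC hCP hxC).not_ge hk

lemma mem_prune_minClade : d ∈ prune T (minClade T d) k :=
  mem_prune.2 ⟨mem_minClade, fun _ hC hCP hdC =>
    (hCP.not_subset (minClade_subset hC hdC)).elim⟩

lemma le_min_prune [Bot α] (hT : IsGregFamily T) (hk : k ≤ d) :
    k ≤ (prune T (minClade T d) k).min := by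
  refine Finset.le_min fun x hx => ?_
  obtain ⟨hxP, hx⟩ := mem_prune.1 hx
  rcases (minClade_subset (hT.minClade_mem d) hxP).eq_or_ssubset with h | h
  · rwa [hT.minClade_injective h]
  · exact (hx _ (hT.minClade_mem x) h mem_minClade).le.trans (min_le mem_minClade)

lemma IsHierarchy.nestedOrDisjoint_prune (hT : IsHierarchy T) (hP : P ∈ T) (hB : B ∈ T) :
    NestedOrDisjoint (prune T P k) B := by
  rcases hT.nestedOrDisjoint P hP B hB with h | h | h
  · exact .inl (prune_subset.trans h)
  · rcases h.eq_or_ssubset with rfl | h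
    · exact .inl prune_subset
    · refine or_iff_not_imp_left.2 fun _ => or_iff_not_imp_right.2 fun hdisj w hw => ?_
      obtain ⟨x, hx, hxB⟩ := not_disjoint_iff.1 hdisj
      refine mem_prune.2 ⟨h.subset hw, fun C hC hCP hwC => ?_⟩
      rcases hT.subset_or_subset hB hC hw hwC with hBC | hCB
      · exact (mem_prune.1 hx).2 C hC hCP (hBC hxB)
      · exact ((mem_prune.1 hx).2 B hB h hxB).trans_le (min_mono hCB)
  · exact .inr (.inr (disjoint_of_subset_left prune_subset h))

lemma prune_mem_prunings [Bot α] (hT : IsGregFamily T) (hk : k ≤ d) (hC : C ∈ T)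
    (hCd : C ⊂ minClade T d) (hCk : C.min ≤ k) : prune T (minClade T d) k ∈ prunings T := by
  obtain ⟨c, hc⟩ := hT.nonempty C hC
  have hc_notMem : c ∉ prune T (minClade T d) k :=
    disjoint_right.1 (disjoint_prune hC hCd hCk) hc
  refine mem_prunings.2 ⟨fun h => ?_, ⟨d, mem_prune_minClade⟩,
    fun B hB => hT.nestedOrDisjoint_prune (hT.minClade_mem d) hB, minClade T d,
    hT.minClade_mem d, prune_subset.ssubset_of_not_subset fun h => hc_notMem (h (hCd.subset hc)),
    fun x hxP hx => ?_⟩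
  · exact hc_notMem (minClade_subset h mem_prune_minClade (hCd.subset hc))
  · obtain ⟨B, hB, hBP, hxB, hBk⟩ : ∃ B ∈ T, B ⊂ minClade T d ∧ x ∈ B ∧ B.min ≤ k := by
      rw [mem_prune] at hx
      simpa only [hxP, true_and, not_forall, exists_prop, not_lt] using hx
    have hdisj := disjoint_prune hB hBP hBk
    exact ⟨B, hB, hxB, hdisj, (hBk.trans (le_min_prune hT hk)).lt_of_ne
      (min_ne_min_of_disjoint ⟨d, mem_prune_minClade⟩ hdisj).symm⟩

lemma IsHierarchy.mem_prune_parentClade_iff (hT : IsHierarchy T) (hB : B ∈ T) (hBu : B ≠ univ)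
    (hx : x ∈ B) : x ∈ prune T (parentClade T B) k ↔ k < B.min := by
  have hBP := hT.ssubset_parentClade ⟨x, hx⟩ hBu
  refine ⟨fun h => (mem_prune.1 h).2 B hB hBP hx, fun h => mem_prune.2 ⟨hBP.subset hx, ?_⟩⟩
  intro C hC hCP hxC
  exact h.trans_le (min_mono (hT.subset_of_ssubset_parentClade hC hB hCP hxC hx))

end Prune

section Count

variable {C : Finset α} {a x : α}

lemma IsHierarchy.eq_of_prune_parentClade_eq (hT : IsHierarchy T) (hB : B ∈ T) (hC : C ∈ T)
    (hBu : B ≠ univ) (hCu : C ≠ univ) (hP : parentClade T B = parentClade T C)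
    (h : prune T (parentClade T B) B.min = prune T (parentClade T C) C.min) : B = C := by
  obtain ⟨b, hb⟩ := min_of_nonempty (hT.nonempty B hB)
  obtain ⟨c, hc⟩ := min_of_nonempty (hT.nonempty C hC)
  have hCB : ¬B.min < C.min := fun hlt => by
    have hmem := (hT.mem_prune_parentClade_iff hC hCu (mem_of_min hc)).2 hlt
    rw [← hP, h] at hmem
    exact ((hT.mem_prune_parentClade_iff hC hCu (mem_of_min hc)).1 hmem).false
  have hBC : ¬C.min < B.min := fun hlt => by
    have hmem := (hT.mem_prune_parentClade_iff hB hBu (mem_of_min hb)).2 hlt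
    rw [hP, ← h] at hmem
    exact ((hT.mem_prune_parentClade_iff hB hBu (mem_of_min hb)).1 hmem).false
  have hmin : B.min = C.min := (not_lt.1 hBC).antisymm (not_lt.1 hCB)
  exact hT.eq_of_parentClade_eq hB hC hBu hCu hP (mem_of_min hb) (mem_of_min (hmin ▸ hb))

lemma exists_removed_child [Bot α] (hT : IsCayleyFamily T) (hA : A ∈ prunings T)
    (hP : IsPruning T A P) (hxP : x ∈ P) (hxA : x ∉ A) :
    ∃ C ∈ T, C ⊂ P ∧ parentClade T C = P ∧ Disjoint A C ∧ C.min < A.min ∧ x ∈ C := by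
  obtain ⟨-, hAne, hAT, -⟩ := mem_prunings.1 hA
  obtain ⟨a, ha⟩ := hAne
  obtain ⟨B, hB, hxB, hAB, hBmin⟩ := hP.exists_min_lt x hxP hxA
  have hBP : B ⊂ P := (hT.nestedOrDisjoint B hB P hP.mem).ssubset hxB hxP
    (hP.ssubset.subset ha) (disjoint_left.1 hAB ha)
  obtain ⟨C, hC, hBC, hCP, hparent⟩ := hT.exists_child hB hP.mem hBP
  refine ⟨C, hC, hCP, hparent, ?_, (min_mono hBC).trans_lt hBmin, hBC hxB⟩
  rcases hAT C hC with h | h | h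
  · exact (hCP.not_subset (hP.subset_of_subset hT ⟨a, ha⟩ hC h)).elim
  · exact (hxA (h (hBC hxB))).elim
  · exact h

lemma exists_prune_parentClade_eq [Bot α] (hT : IsCayleyFamily T) (hA : A ∈ prunings T) :
    ∃ B ∈ improperMembers T, prune T (parentClade T B) B.min = A := by
  obtain ⟨-, hAne, hAT, P, hP⟩ := mem_prunings.1 hA
  obtain ⟨d, hd⟩ := hT.exists_minClade_eq P hP.mem
  have hdA : d ∈ A := (hd ▸ hP).mem_of_minClade hAne
  obtain ⟨x, hxP, hxA⟩ := exists_of_ssubset hP.ssubset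
  let removed : Finset (Finset α) :=
    T.filter fun C => C ⊂ P ∧ parentClade T C = P ∧ Disjoint A C ∧ C.min < A.min
  have hremoved {y : α} (hyP : y ∈ P) (hyA : y ∉ A) : ∃ C ∈ removed, y ∈ C := by
    obtain ⟨C, hC, hCP, hparent, hAC, hCmin, hyC⟩ := exists_removed_child hT hA hP hyP hyA
    exact ⟨C, mem_filter.2 ⟨hC, hCP, hparent, hAC, hCmin⟩, hyC⟩
  obtain ⟨C₀, hC₀, -⟩ := hremoved hxP hxA
  obtain ⟨B, hB, hBmax⟩ := exists_max_image removed Finset.min ⟨C₀, hC₀⟩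
  obtain ⟨hBT, -, hparent, -, hBmin⟩ := mem_filter.1 hB
  refine ⟨B, mem_improperMembers.2 ⟨hBT, d, hd.trans hparent.symm, hBmin.trans_le (min_le hdA)⟩, ?_⟩
  ext y
  rw [hparent, mem_prune]
  constructor
  · rintro ⟨hyP, hy⟩
    by_contra hyA
    obtain ⟨C, hC, hyC⟩ := hremoved hyP hyA
    exact (hBmax C hC).not_gt (hy C (mem_filter.1 hC).1 (mem_filter.1 hC).2.1 hyC)
  · refine fun hyA => ⟨hP.ssubset.subset hyA, fun C hC hCP hyC => ?_⟩
    have hCA : C ⊆ A := ((hAT C hC).subset_or_subset hyA hyC).resolve_left fun h =>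
      hCP.not_subset (hP.subset_of_subset hT hAne hC h)
    exact hBmin.trans_le (min_mono hCA)

lemma ne_univ_of_mem_improperMembers [OrderBot α] (hT : IsGregFamily T)
    (hB : B ∈ improperMembers T) : B ≠ univ := by
  rintro rfl
  obtain ⟨-, d, hd, hlt⟩ := mem_improperMembers.1 hB
  rw [parentClade_univ, ← hT.minClade_bot] at hd
  rw [hT.minClade_injective hd] at hlt
  exact hlt.not_ge (Finset.le_min fun _ _ => WithTop.coe_le_coe.2 bot_le)

lemma card_prunings [OrderBot α] (hT : IsCayleyFamily T) :
    #(prunings T) = #(improperMembers T) := by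
  symm
  refine card_bij (fun B _ => prune T (parentClade T B) B.min) ?_ ?_ fun A hA => by
    simpa only [exists_prop] using exists_prune_parentClade_eq hT hA
  · intro B hB
    have hBu := ne_univ_of_mem_improperMembers hT.toIsGregFamily hB
    obtain ⟨hBT, d, hd, hlt⟩ := mem_improperMembers.1 hB
    rw [← hd]
    exact prune_mem_prunings hT.toIsGregFamily hlt.le hBT
      (hd ▸ hT.ssubset_parentClade (hT.nonempty B hBT) hBu) le_rfl
  · intro B hB C hC h
    have hBu := ne_univ_of_mem_improperMembers hT.toIsGregFamily hB
    have hCu := ne_univ_of_mem_improperMembers hT.toIsGregFamily hC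
    obtain ⟨hBT, d, hd, -⟩ := mem_improperMembers.1 hB
    obtain ⟨hCT, e, he, -⟩ := mem_improperMembers.1 hC
    have hdC : d ∈ parentClade T C := prune_subset (h ▸ hd ▸ mem_prune_minClade)
    have heB : e ∈ parentClade T B := prune_subset (h ▸ he ▸ mem_prune_minClade)
    have hparent : parentClade T B = parentClade T C :=
      (hd ▸ minClade_subset (he ▸ hT.minClade_mem e) hdC).antisymm
        (he ▸ minClade_subset (hd ▸ hT.minClade_mem d) heB)
    exact hT.eq_of_prune_parentClade_eq hBT hCT hBu hCu hparent h

/-- The pruning of the clade of `a` which makes `a` the smallest label of a clade. -/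
def lowPruning (T : Finset (Finset α)) (a : α) : Finset α := prune T (minClade T a) a

lemma min_lowPruning [Bot α] (hT : IsGregFamily T) : (lowPruning T a).min = a :=
  (min_le mem_prune_minClade).antisymm (le_min_prune hT le_rfl)

lemma lowPruning_mem_prunings [Bot α] (hT : IsGregFamily T) (ha : a ∈ improperLabels T) :
    lowPruning T a ∈ prunings T := by
  have hmin := hT.mem_improperLabels_iff_min_minClade.1 ha
  obtain ⟨b, hb⟩ := min_of_nonempty (hT.nonempty _ (hT.minClade_mem a))
  have hba : (b : WithTop α) < a := hb ▸ (min_le mem_minClade).lt_of_ne hmin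
  have hbP := minClade_subset (hT.minClade_mem a) (mem_of_min hb)
  refine prune_mem_prunings hT le_rfl (hT.minClade_mem b) (hbP.ssubset_of_ne fun h => ?_)
    ((min_le mem_minClade).trans hba.le)
  exact hba.ne (congrArg _ (hT.minClade_injective h))

lemma isPruning_minClade [Bot α] (hT : IsCayleyFamily T) (ha : a ∈ improperLabels T)
    (hA : A ∈ prunings T) (hmin : A.min = a) : IsPruning T A (minClade T a) := by
  obtain ⟨-, hAne, hAT, P, hP⟩ := mem_prunings.1 hA
  have haA := mem_of_min hmin
  suffices hPa : P = minClade T a from hPa ▸ hP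
  refine Subset.antisymm (hP.subset_of_subset hT hAne (hT.minClade_mem a) ?_)
    (minClade_subset hP.mem (hP.ssubset.subset haA))
  refine ((hAT _ (hT.minClade_mem a)).subset_or_subset haA mem_minClade).resolve_right fun h => ?_
  exact hT.mem_improperLabels_iff_min_minClade.1 ha
    ((min_le mem_minClade).antisymm (hmin ▸ min_mono h))

lemma subset_of_min_eq [Bot α] (hT : IsCayleyFamily T) (ha : a ∈ improperLabels T)
    (hA : A ∈ prunings T) (hB : B ∈ prunings T) (hAmin : A.min = a) (hBmin : B.min = a) :
    A ⊆ B := by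
  by_contra hAB
  exact ((isPruning_minClade hT ha hB hBmin).min_lt_min (mem_prunings.1 hA).2.2.1
    (isPruning_minClade hT ha hA hAmin).ssubset.subset (mem_of_min hAmin) (mem_of_min hBmin)
    hAB).ne (hAmin.trans hBmin.symm)

lemma eq_lowPruning [Bot α] (hT : IsCayleyFamily T) (ha : a ∈ improperLabels T)
    (hA : A ∈ prunings T) (hmin : A.min = a) : A = lowPruning T a := by
  have hlow := lowPruning_mem_prunings hT.toIsGregFamily ha
  have hlowmin := min_lowPruning (a := a) hT.toIsGregFamily
  exact (subset_of_min_eq hT ha hA hlow hmin hlowmin).antisymm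
    (subset_of_min_eq hT ha hlow hA hlowmin hmin)

/-- The low prunings of the improper parents. -/
def lowPrunings (T : Finset (Finset α)) : Finset (Finset α) :=
  (improperLabels T).image (lowPruning T)

lemma lowPrunings_subset [Bot α] (hT : IsGregFamily T) : lowPrunings T ⊆ prunings T :=
  image_subset_iff.2 fun _ ha => lowPruning_mem_prunings hT ha

lemma lowPruning_injective [Bot α] (hT : IsGregFamily T) : Injective (lowPruning T) :=
  fun a b h => WithTop.coe_injective <| by
    simpa only [min_lowPruning hT] using congrArg Finset.min h

lemma card_lowPrunings [Bot α] (hT : IsGregFamily T) : #(lowPrunings T) = #(improperLabels T) :=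
  card_image_of_injective _ (lowPruning_injective hT)

lemma improperLabels_union [Bot α] {S : Finset (Finset α)} (hT : IsCayleyFamily T)
    (hS : S ⊆ prunings T) :
    improperLabels (T ∪ S) = {a ∈ improperLabels T | lowPruning T a ∉ S} := by
  ext a
  rw [mem_filter, mem_improperLabels, forall_mem_union, ← mem_improperLabels]
  refine and_congr_right fun ha => ⟨fun h hlow => ?_, fun h A hA hmin => ?_⟩
  · exact h _ hlow (min_lowPruning hT.toIsGregFamily)
  · exact h (eq_lowPruning hT ha (hS hA) hmin ▸ hA)

lemma card_improperLabels_union [Bot α] {S : Finset (Finset α)} (hT : IsCayleyFamily T)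
    (hS : S ⊆ prunings T) : #(improperLabels (T ∪ S)) = #(lowPrunings T \ S) := by
  have himage : lowPrunings T \ S = (improperLabels (T ∪ S)).image (lowPruning T) := by
    rw [improperLabels_union hT hS, ← filter_notMem_eq_sdiff, lowPrunings, filter_image]
  rw [himage, card_image_of_injective _ (lowPruning_injective hT.toIsGregFamily)]

end Count

end Pruning

section Sums

open Finset

lemma sum_powerset_pow_mul_pow {ι R : Type*} [DecidableEq ι] [CommSemiring R] (y t : R)
    {L P : Finset ι} (h : L ⊆ P) :
    ∑ S ∈ P.powerset, y ^ #S * t ^ #(L \ S) = (y + 1) ^ (#P - #L) * (y + t) ^ #L := by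
  calc ∑ S ∈ P.powerset, y ^ #S * t ^ #(L \ S)
      = ∏ i ∈ P, (y + if i ∈ L then t else 1) := by
        rw [prod_add]
        refine sum_congr rfl fun S _ => ?_
        have hinter : {i ∈ P \ S | i ∈ L} = L \ S := by
          ext i
          simp only [mem_filter, mem_sdiff]
          exact ⟨fun hi => ⟨hi.2, hi.1.2⟩, fun hi => ⟨⟨h hi.1, hi.2⟩, hi.1⟩⟩
        rw [prod_const, prod_ite, prod_const, prod_const_one, mul_one, hinter]
    _ = (y + 1) ^ (#P - #L) * (y + t) ^ #L := by
        rw [← prod_sdiff h, ← card_sdiff_of_subset h]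
        congr 1
        · exact prod_eq_pow_card fun i hi => by rw [if_neg (mem_sdiff.1 hi).2]
        · exact prod_eq_pow_card fun i hi => by rw [if_pos hi]

variable {α : Type*} [LinearOrder α] [Fintype α] [OrderBot α] {F T : Finset (Finset α)}

lemma IsGregFamily.card_le_two_mul_card (hF : IsGregFamily F) : #F ≤ 2 * Fintype.card α := by
  have hT := hF.isCayleyFamily_core
  calc #F = #(F \ core F) + #(core F) := (card_sdiff_add_card_eq_card core_subset).symm
    _ ≤ #(prunings (core F)) + #(core F) := by
        gcongr
        exact hF.sdiff_core_subset_prunings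
    _ ≤ #(core F) + #(core F) := by
        rw [card_prunings hT]
        gcongr
        exact fun B hB => (mem_improperMembers.1 hB).1
    _ = 2 * Fintype.card α := by rw [hT.card_eq, two_mul]

variable {R : Type*} [CommSemiring R] (y t : R)

open scoped Classical in
lemma sum_isGregFamily_with_core_eq (hT : IsCayleyFamily T) :
    ∑ F with IsGregFamily F ∧ core F = T, y ^ (#F - Fintype.card α) * t ^ #(improperLabels F)
      = (y + 1) ^ (#(improperMembers T) - #(improperLabels T))
        * (y + t) ^ #(improperLabels T) := by
  have hdisj {S : Finset (Finset α)} (hS : S ⊆ prunings T) : Disjoint T S :=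
    disjoint_right.2 fun A hA => (mem_prunings.1 (hS hA)).1
  rw [← card_prunings hT, ← card_lowPrunings hT.toIsGregFamily,
    ← sum_powerset_pow_mul_pow y t (lowPrunings_subset hT.toIsGregFamily)]
  symm
  refine sum_nbij' (T ∪ ·) (· \ T) ?_ ?_ ?_ ?_ ?_
  · intro S hS
    rw [mem_powerset] at hS
    exact mem_filter.2 ⟨mem_univ _, hT.isGregFamily_union hS, hT.core_union hS⟩
  · intro F hF
    obtain ⟨-, hGreg, rfl⟩ := mem_filter.1 hF
    exact mem_powerset.2 hGreg.sdiff_core_subset_prunings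
  · intro S hS
    exact union_sdiff_cancel_left (hdisj (mem_powerset.1 hS))
  · intro F hF
    obtain ⟨-, -, rfl⟩ := mem_filter.1 hF
    exact union_sdiff_of_subset core_subset
  · intro S hS
    rw [mem_powerset] at hS
    rw [card_union_of_disjoint (hdisj hS), hT.card_eq, Nat.add_sub_cancel_left,
      card_improperLabels_union hT hS]

open scoped Classical in
theorem sum_isGregFamily_eq_sum_isCayleyFamily :
    ∑ F : Finset (Finset α) with IsGregFamily F,
        y ^ (#F - Fintype.card α) * t ^ #(improperLabels F)
      = ∑ T : Finset (Finset α) with IsCayleyFamily T,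
          (y + 1) ^ (#(improperMembers T) - #(improperLabels T))
            * (y + t) ^ #(improperLabels T) := by
  rw [← sum_fiberwise_of_maps_to (g := core) fun F hF =>
    mem_filter.2 ⟨mem_univ _, (mem_filter.1 hF).2.isCayleyFamily_core⟩]
  refine sum_congr rfl fun T hT => ?_
  rw [filter_filter, sum_isGregFamily_with_core_eq y t (mem_filter.1 hT).2]

end Sums

section LabelledTrees

variable {V : Type*} {p q : V → V} {u v w : V}

/-- `v` is a descendant of `w` (possibly `w` itself) with respect to the parent map `p`. -/
def Descends (p : V → V) (v w : V) : Prop := ∃ k, p^[k] v = w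

namespace Descends

lemma refl (p : V → V) (v : V) : Descends p v v := ⟨0, rfl⟩

lemma parent (p : V → V) (v : V) : Descends p v (p v) := ⟨1, rfl⟩

lemma trans (huv : Descends p u v) (hvw : Descends p v w) : Descends p u w := by
  obtain ⟨j, rfl⟩ := huv
  obtain ⟨k, rfl⟩ := hvw
  exact ⟨k + j, iterate_add_apply _ _ _ _⟩

lemma parent_of_ne (h : Descends p v w) (hne : v ≠ w) : Descends p (p v) w := by
  obtain ⟨k, rfl⟩ := h
  cases k with
  | zero => exact (hne rfl).elim
  | succ k => exact ⟨k, (iterate_succ_apply p k v).symm⟩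

lemma comparable (huv : Descends p u v) (huw : Descends p u w) :
    Descends p v w ∨ Descends p w v := by
  obtain ⟨j, rfl⟩ := huv
  obtain ⟨k, rfl⟩ := huw
  rcases le_total j k with h | h
  · exact .inl ⟨k - j, by rw [← iterate_add_apply, Nat.sub_add_cancel h]⟩
  · exact .inr ⟨j - k, by rw [← iterate_add_apply, Nat.sub_add_cancel h]⟩

lemma exists_child (h : Descends p v w) (hne : v ≠ w) :
    ∃ c, Descends p v c ∧ c ≠ w ∧ p c = w := by
  obtain ⟨k, hk⟩ := h
  induction k with
  | zero => exact (hne hk).elim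
  | succ k ih =>
    by_cases hkw : p^[k] v = w
    · exact ih hkw
    · exact ⟨p^[k] v, ⟨k, rfl⟩, hkw, by rw [← hk, iterate_succ_apply']⟩

end Descends

variable {α : Type*}

/-- `p` is the parent map of a tree with vertex set `V`, rooted at the vertex labelled `⊥`, whose
labelled vertices are the `lab a` and whose unlabelled vertices have at least two children. The
root is its own parent. -/
structure IsLabelledTree [Bot α] (lab : α → V) (p : V → V) : Prop where
  injective : Injective lab
  root : p (lab ⊥) = lab ⊥
  reach : ∀ v, Descends p v (lab ⊥)
  branching : ∀ v, v ∉ Set.range lab → {w | w ≠ v ∧ p w = v}.Nontrivial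

open scoped Classical in
/-- The labels of the descendants of `v`. -/
def clade [Fintype α] (lab : α → V) (p : V → V) (v : V) : Finset α := {a | Descends p (lab a) v}

/-- The family of the clades of all the vertices. -/
def clades [Fintype α] [DecidableEq α] [Fintype V] (lab : α → V) (p : V → V) :
    Finset (Finset α) :=
  Finset.univ.image (clade lab p)

section Clade

variable [Fintype α] {lab : α → V} {a b : α}

lemma mem_clade : a ∈ clade lab p v ↔ Descends p (lab a) v := by
  simp only [clade, Finset.mem_filter, Finset.mem_univ, true_and]

lemma mem_clade_lab : a ∈ clade lab p (lab a) := mem_clade.2 (.refl p _)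

lemma clade_mono (h : Descends p v w) : clade lab p v ⊆ clade lab p w :=
  fun _ ha => mem_clade.2 ((mem_clade.1 ha).trans h)

variable [Fintype V] [DecidableEq α]

lemma mem_clades {A : Finset α} : A ∈ clades lab p ↔ ∃ v, clade lab p v = A := by
  simp only [clades, Finset.mem_image, Finset.mem_univ, true_and]

lemma clade_mem_clades (v : V) : clade lab p v ∈ clades lab p := mem_clades.2 ⟨v, rfl⟩

lemma coe_clades : (clades lab p : Set (Finset α)) = Set.range (clade lab p) := by
  rw [clades, Finset.coe_image, Finset.coe_univ, Set.image_univ]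

lemma minClade_clades : minClade (clades lab p) a = clade lab p (lab a) := by
  refine (minClade_subset (clade_mem_clades _) mem_clade_lab).antisymm
    (Finset.le_inf fun A hA => ?_)
  obtain ⟨hA, ha⟩ := Finset.mem_filter.1 hA
  obtain ⟨v, rfl⟩ := mem_clades.1 hA
  exact clade_mono (mem_clade.1 ha)

end Clade

namespace IsLabelledTree

variable [Bot α] {lab : α → V}

lemma iterate_root (h : IsLabelledTree lab p) (k : ℕ) : p^[k] (lab ⊥) = lab ⊥ :=
  iterate_fixed h.root k

lemma eq_root_of_isPeriodicPt (h : IsLabelledTree lab p) {k : ℕ} (hk : 0 < k)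
    (hv : IsPeriodicPt p k v) : v = lab ⊥ := by
  obtain ⟨i, hi⟩ := h.reach v
  calc v = p^[k * i] v := (hv.mul_const i).symm
    _ = p^[k * i - i] (p^[i] v) := by
        rw [← iterate_add_apply, Nat.sub_add_cancel (Nat.le_mul_of_pos_left i hk)]
    _ = lab ⊥ := by rw [hi, h.iterate_root]

lemma antisymm (h : IsLabelledTree lab p) (hvw : Descends p v w) (hwv : Descends p w v) :
    v = w := by
  obtain ⟨j, rfl⟩ := hvw
  obtain ⟨k, hk⟩ := hwv
  rw [← iterate_add_apply] at hk
  rcases Nat.eq_zero_or_pos j with rfl | hj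
  · rfl
  · rw [h.eq_root_of_isPeriodicPt (Nat.add_pos_right k hj) hk, h.iterate_root]

lemma exists_descends_lab [Finite V] (h : IsLabelledTree lab p) (v : V) :
    ∃ a, Descends p (lab a) v := by
  let r : V → V → Prop := fun x y => Descends p x y ∧ x ≠ y
  have : IsTrans V r := ⟨fun x y z hxy hyz =>
    ⟨hxy.1.trans hyz.1, fun hxz => hxy.2 (h.antisymm hxy.1 (hxz ▸ hyz.1))⟩⟩
  have : Std.Irrefl r := ⟨fun x hx => hx.2 rfl⟩
  induction v using (Finite.wellFounded_of_trans_of_irrefl r).induction with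
  | h v ih =>
    by_cases hv : v ∈ Set.range lab
    · obtain ⟨a, rfl⟩ := hv
      exact ⟨a, .refl p _⟩
    · obtain ⟨w, hwv, rfl⟩ := (h.branching v hv).nonempty
      obtain ⟨a, ha⟩ := ih w ⟨.parent p w, hwv⟩
      exact ⟨a, ha.trans (.parent p w)⟩

section Labels

variable [Fintype α]

lemma clade_root (h : IsLabelledTree lab p) : clade lab p (lab ⊥) = Finset.univ :=
  Finset.eq_univ_of_forall fun a => mem_clade.2 (h.reach (lab a))

lemma disjoint_clade_of_siblings (h : IsLabelledTree lab p) (hvw : v ≠ w) (hv : v ≠ p v)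
    (hw : w ≠ p w) (heq : p v = p w) : Disjoint (clade lab p v) (clade lab p w) := by
  refine Finset.disjoint_left.2 fun a hav haw => ?_
  rcases (mem_clade.1 hav).comparable (mem_clade.1 haw) with hdesc | hdesc
  · exact hw (h.antisymm (.parent p w) (heq ▸ hdesc.parent_of_ne hvw))
  · exact hv (h.antisymm (.parent p v) (heq ▸ hdesc.parent_of_ne hvw.symm))

section Finite

variable [Finite V]

lemma clade_nonempty (h : IsLabelledTree lab p) (v : V) : (clade lab p v).Nonempty :=
  (h.exists_descends_lab v).imp fun _ => mem_clade.2

lemma clade_ssubset (h : IsLabelledTree lab p) (hvw : Descends p v w) (hne : v ≠ w) :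
    clade lab p v ⊂ clade lab p w := by
  suffices ∃ a ∈ clade lab p w, a ∉ clade lab p v from
    (clade_mono hvw).ssubset_of_not_subset (Finset.not_subset.2 this)
  by_cases hw : w ∈ Set.range lab
  · obtain ⟨a, rfl⟩ := hw
    exact ⟨a, mem_clade_lab, fun ha => hne (h.antisymm hvw (mem_clade.1 ha))⟩
  · obtain ⟨c, hvc, hcw, rfl⟩ := hvw.exists_child hne
    obtain ⟨d, ⟨hdw, hdc⟩, hne⟩ := (h.branching _ hw).exists_ne c
    obtain ⟨a, ha⟩ := h.clade_nonempty d
    refine ⟨a, hdc ▸ clade_mono (.parent p d) ha, fun hav => ?_⟩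
    exact Finset.disjoint_left.1
      (h.disjoint_clade_of_siblings hne (hdc.symm ▸ hdw) hcw hdc) ha (clade_mono hvc hav)

lemma clade_subset_iff (h : IsLabelledTree lab p) :
    clade lab p v ⊆ clade lab p w ↔ Descends p v w := by
  refine ⟨fun hsub => ?_, clade_mono⟩
  obtain ⟨a, ha⟩ := h.clade_nonempty v
  rcases (mem_clade.1 ha).comparable (mem_clade.1 (hsub ha)) with hdesc | hdesc
  · exact hdesc
  · by_contra hvw
    exact (h.clade_ssubset hdesc fun heq => hvw (heq ▸ .refl p _)).not_subset hsub

lemma clade_injective (h : IsLabelledTree lab p) : Injective (clade lab p) := fun _ _ heq =>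
  h.antisymm (h.clade_subset_iff.1 heq.subset) (h.clade_subset_iff.1 heq.superset)

lemma clade_eq_univ_iff (h : IsLabelledTree lab p) :
    clade lab p v = Finset.univ ↔ v = lab ⊥ := by
  rw [← h.clade_root, h.clade_injective.eq_iff]

end Finite

section Clades

variable [Fintype V] [DecidableEq α]

lemma isGregFamily_clades (h : IsLabelledTree lab p) : IsGregFamily (clades lab p) where
  nonempty A hA := by
    obtain ⟨v, rfl⟩ := mem_clades.1 hA
    exact h.clade_nonempty v
  univ_mem := h.clade_root ▸ clade_mem_clades _
  nestedOrDisjoint A hA B hB := by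
    obtain ⟨v, rfl⟩ := mem_clades.1 hA
    obtain ⟨w, rfl⟩ := mem_clades.1 hB
    by_contra! hnot
    obtain ⟨hvw, hwv, hdisj⟩ := not_or.1 hnot |>.imp_right not_or.1
    obtain ⟨a, hav, haw⟩ := Finset.not_disjoint_iff.1 hdisj
    exact ((mem_clade.1 hav).comparable (mem_clade.1 haw)).elim (hvw ∘ clade_mono)
      (hwv ∘ clade_mono)
  eq_univ_of_bot_mem A hA hbot := by
    obtain ⟨v, rfl⟩ := mem_clades.1 hA
    rw [← h.antisymm (mem_clade.1 hbot) (h.reach v), h.clade_root]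
  separation a b hab := by
    refine h.injective (h.clade_injective ?_)
    rw [← minClade_clades, ← minClade_clades, minClade, minClade,
      Finset.filter_congr hab]

lemma card_clades (h : IsLabelledTree lab p) : (clades lab p).card = Fintype.card V := by
  rw [clades, Finset.card_image_of_injective _ h.clade_injective, Finset.card_univ]

lemma isCayleyFamily_clades (h : IsLabelledTree lab p) (hlab : Surjective lab) :
    IsCayleyFamily (clades lab p) where
  toIsGregFamily := h.isGregFamily_clades
  exists_minClade_eq A hA := by
    obtain ⟨v, rfl⟩ := mem_clades.1 hA
    obtain ⟨a, rfl⟩ := hlab v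
    exact ⟨a, minClade_clades⟩

lemma parentClade_clades (h : IsLabelledTree lab p) (v : V) :
    parentClade (clades lab p) (clade lab p v) = clade lab p (p v) := by
  rcases eq_or_ne v (lab ⊥) with rfl | hv
  · rw [h.root, h.clade_root, parentClade_univ]
  · have hpv : v ≠ p v := fun heq => hv (h.eq_root_of_isPeriodicPt one_pos heq.symm)
    have hF := h.isGregFamily_clades.toIsHierarchy
    obtain ⟨w, hw⟩ := mem_clades.1 (hF.parentClade_mem (h.clade_nonempty v))
    have hvw : clade lab p v ⊂ clade lab p w :=
      hw ▸ hF.ssubset_parentClade (h.clade_nonempty v) (h.clade_eq_univ_iff.not.2 hv)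
    refine (parentClade_subset (clade_mem_clades _)
      (h.clade_ssubset (.parent p v) hpv)).antisymm ?_
    rw [← hw]
    exact clade_mono ((h.clade_subset_iff.1 hvw.subset).parent_of_ne
      fun heq => hvw.ne (congrArg _ heq))

lemma iterate_eq_root_iff (h : IsLabelledTree lab p) (k : ℕ) (v : V) :
    p^[k] v = lab ⊥ ↔ cladeDepth (clades lab p) (clade lab p v) ≤ k := by
  have hF := h.isGregFamily_clades.toIsHierarchy
  induction k generalizing v with
  | zero => rw [Nat.le_zero, hF.cladeDepth_eq_zero_iff, h.clade_eq_univ_iff, iterate_zero_apply]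
  | succ k ih =>
    rcases eq_or_ne v (lab ⊥) with rfl | hv
    · simp only [h.iterate_root, hF.cladeDepth_eq_zero_iff.2 h.clade_root, zero_le]
    · rw [iterate_succ_apply, hF.cladeDepth_eq_succ (h.clade_nonempty v)
        (h.clade_eq_univ_iff.not.2 hv), h.parentClade_clades, Nat.add_le_add_iff_right]
      exact ih (p v)

end Clades

lemma parent_eq_of_clade_eq [Finite V] (hp : IsLabelledTree lab p)
    (hq : IsLabelledTree lab q) (h : clade lab p = clade lab q) : p = q := by
  classical
  cases nonempty_fintype V
  funext v
  refine hp.clade_injective ?_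
  rw [← hp.parentClade_clades, h, ← hq.parentClade_clades, clades, clades, h]

end Labels

lemma exists_iterate_eq_root [Fintype V] (h : IsLabelledTree lab p) (v : V) :
    ∃ k < Fintype.card V, p^[k] v = lab ⊥ := by
  classical
  let := Fintype.ofInjective lab h.injective
  exact ⟨_, h.card_clades ▸ cladeDepth_lt_card (clade_mem_clades v),
    (h.iterate_eq_root_iff _ v).2 le_rfl⟩

end IsLabelledTree

namespace IsGregFamily

variable [Bot α] [Fintype α] [DecidableEq α] {F : Finset (Finset α)} {lab : α → V}
  {e : V → Finset α}

lemma descends_iff_subset (hF : IsGregFamily F) (he : Injective e) (hmem : ∀ v, e v ∈ F)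
    (hp : ∀ v, e (p v) = parentClade F (e v)) : Descends p v w ↔ e v ⊆ e w := by
  constructor
  · rintro ⟨k, rfl⟩
    induction k with
    | zero => rfl
    | succ k ih => exact ih.trans (by rw [iterate_succ_apply', hp]; exact subset_parentClade)
  · intro hvw
    induction hA : e v using WellFoundedGT.induction generalizing v with
    | ind A ih =>
      subst hA
      rcases hvw.eq_or_ssubset with heq | hlt
      · exact he heq ▸ .refl p v
      · have hvu : e v ≠ Finset.univ := fun h => (h ▸ hlt).not_subset (Finset.subset_univ _)
        have hne := hF.nonempty _ (hmem v)
        exact (Descends.parent p v).trans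
          (ih _ (hp v ▸ hF.ssubset_parentClade hne hvu)
            (hp v ▸ parentClade_subset (hmem w) hlt) rfl)

lemma exists_isLabelledTree [Finite V] (hF : IsGregFamily F) (he : Injective e)
    (hrange : Set.range e = F) (hlab : ∀ a, e (lab a) = minClade F a) :
    ∃ p, IsLabelledTree lab p ∧ clade lab p = e := by
  have hmem (v : V) : e v ∈ F := Finset.mem_coe.1 (hrange ▸ Set.mem_range_self v)
  have hparent (v : V) : ∃ w, e w = parentClade F (e v) := by
    rw [← Set.mem_range, hrange]
    exact hF.parentClade_mem (hF.nonempty _ (hmem v))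
  choose p hp using hparent
  have hdesc {v w : V} : Descends p v w ↔ e v ⊆ e w := hF.descends_iff_subset he hmem hp
  have hdesc_lab {a : α} {v : V} : Descends p (lab a) v ↔ a ∈ e v := by
    rw [hdesc, hlab]
    exact ⟨fun h => h mem_minClade, minClade_subset (hmem v)⟩
  have hroot : e (lab ⊥) = Finset.univ := by rw [hlab, hF.minClade_bot]
  refine ⟨p, ⟨fun a b hab => hF.minClade_injective ?_, he ?_, fun v => ?_, fun v hv => ?_⟩, ?_⟩
  · rw [← hlab, ← hlab, hab]
  · rw [hp, hroot, parentClade_univ]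
  · exact hdesc.2 (hroot ▸ Finset.subset_univ _)
  · have hchild {a : α} (ha : a ∈ e v) : ∃ c, a ∈ e c ∧ c ≠ v ∧ p c = v := by
      obtain ⟨c, hac, hc⟩ := (hdesc_lab.2 ha).exists_child fun h => hv ⟨a, h⟩
      exact ⟨c, hdesc_lab.1 hac, hc⟩
    obtain ⟨a, ha⟩ := hF.nonempty _ (hmem v)
    obtain ⟨c, -, hcv, hpc⟩ := hchild ha
    have hlt : e c ⊂ e v := (hdesc.1 ⟨1, hpc⟩).ssubset_of_ne fun h => hcv (he h)
    obtain ⟨b, hbv, hbc⟩ := Finset.exists_of_ssubset hlt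
    obtain ⟨d, hbd, hdv, hpd⟩ := hchild hbv
    exact ⟨c, ⟨hcv, hpc⟩, d, ⟨hdv, hpd⟩, fun h => hbc (h ▸ hbd)⟩
  · ext v a
    rw [mem_clade, hdesc_lab]

end IsGregFamily

lemma IsLabelledTree.mem_improperLabels_clades [LinearOrder α] [Bot α] [Fintype α] [Fintype V]
    {lab : α → V} {a : α} (h : IsLabelledTree lab p) :
    a ∈ improperLabels (clades lab p) ↔ (clade lab p (lab a)).min ≠ a := by
  rw [h.isGregFamily_clades.mem_improperLabels_iff_min_minClade, minClade_clades]

end LabelledTrees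

section Encodings

variable {n : ℕ}

/-- The smallest element of `A` as a natural number: `β` of a vertex with clade `A`. -/
def minVal (A : Finset (Fin n)) : ℕ := sInf {j | ∃ w : Fin n, w.val = j ∧ w ∈ A}

lemma minVal_eq {A : Finset (Fin n)} {a : Fin n} (h : A.min = a) : minVal A = a.val :=
  IsLeast.csInf_eq ⟨⟨a, rfl, Finset.mem_of_min h⟩, by
    rintro _ ⟨w, rfl, hw⟩
    exact Finset.min_le_of_eq (b := w) hw h⟩

lemma minVal_eq_iff {A : Finset (Fin n)} (hA : A.Nonempty) {a : Fin n} :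
    minVal A = a.val ↔ A.min = a := by
  obtain ⟨b, hb⟩ := Finset.min_of_nonempty hA
  rw [minVal_eq hb, hb, WithTop.coe_inj, Fin.val_inj]

lemma minVal_lt_iff {A : Finset (Fin n)} (hA : A.Nonempty) {a : Fin n} :
    minVal A < a.val ↔ A.min < a := by
  obtain ⟨b, hb⟩ := Finset.min_of_nonempty hA
  rw [minVal_eq hb, hb, WithTop.coe_lt_coe, Fin.val_fin_lt]

namespace CayleyTree

lemma beta_eq_minVal (T : CayleyTree n) (a : Fin n) : T.beta a = minVal (clade id T.1 a) := by
  simp only [beta, minVal, mem_clade]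
  rfl

variable (T : CayleyTree (n + 1))

lemma isLabelledTree : IsLabelledTree id T.1 where
  injective := injective_id
  root := T.2.1 ⊥ rfl
  reach v := (T.2.2 v).imp fun _ hk => Fin.ext hk.2
  branching v hv := (hv ⟨v, rfl⟩).elim

lemma impp_eq_card_improperLabels : T.impp = (improperLabels (clades id T.1)).card := by
  rw [impp, ← Set.ncard_coe_finset]
  congr 1
  ext a
  rw [Set.mem_ofPred_eq, ImproperParent, beta_eq_minVal, Finset.mem_coe,
    T.isLabelledTree.mem_improperLabels_clades, Ne,
    minVal_eq_iff (T.isLabelledTree.clade_nonempty a)]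
  rfl

lemma clade_mem_improperMembers_iff {c : Fin (n + 1)} :
    clade id T.1 c ∈ improperMembers (clades id T.1) ↔ T.ImproperEdge c := by
  have h := T.isLabelledTree
  have hroot : c.val = 0 → ¬ T.beta c < (T.1 c).val := fun hc => by
    rw [T.2.1 c hc, hc]
    exact Nat.not_lt_zero _
  rw [ImproperEdge, and_iff_right_of_imp fun hlt hc => hroot hc hlt, beta_eq_minVal,
    minVal_lt_iff (h.clade_nonempty c), mem_improperMembers,
    and_iff_right (clade_mem_clades c)]
  simp only [minClade_clades, h.parentClade_clades, h.clade_injective.eq_iff, id, exists_eq_left]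

lemma impe_eq_card_improperMembers : T.impe = (improperMembers (clades id T.1)).card := by
  rw [impe, ← Set.ncard_coe_finset,
    ← Set.ncard_image_of_injective _ T.isLabelledTree.clade_injective]
  congr 1
  ext A
  constructor
  · rintro ⟨c, hc, rfl⟩
    exact T.clade_mem_improperMembers_iff.2 hc
  · intro hA
    obtain ⟨c, rfl⟩ := mem_clades.1 (mem_improperMembers.1 hA).1
    exact ⟨c, T.clade_mem_improperMembers_iff.1 hA, rfl⟩

lemma clades_injective : Injective fun T : CayleyTree (n + 1) => clades id T.1 := by
  intro T T' h
  refine Subtype.ext (T.isLabelledTree.parent_eq_of_clade_eq T'.isLabelledTree (funext fun v => ?_))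
  rw [← id_def v, ← minClade_clades, ← minClade_clades]
  exact congrArg (minClade · v) h

lemma exists_clades_eq {F : Finset (Finset (Fin (n + 1)))} (hF : IsCayleyFamily F) :
    ∃ T : CayleyTree (n + 1), clades id T.1 = F := by
  have hrange : Set.range (minClade F) = F := Set.eq_of_subset_of_subset
    (Set.range_subset_iff.2 hF.minClade_mem) hF.exists_minClade_eq
  obtain ⟨p, hp, hclade⟩ :=
    hF.toIsGregFamily.exists_isLabelledTree (lab := id) hF.minClade_injective hrange fun _ => rfl
  refine ⟨⟨p, fun v hv => ?_, fun v => ?_⟩, ?_⟩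
  · rw [Fin.ext hv (b := 0)]
    exact hp.root
  · obtain ⟨k, hk, hroot⟩ := hp.exists_iterate_eq_root v
    exact ⟨k, Fintype.card_fin (n + 1) ▸ hk, congrArg Fin.val hroot⟩
  · rw [← Finset.coe_inj, coe_clades, hclade, hrange]

open scoped Classical in
lemma sum_clades {M : Type*} [AddCommMonoid M] (f : Finset (Finset (Fin (n + 1))) → M) :
    ∑ T : CayleyTree (n + 1), f (clades id T.1)
      = ∑ F : Finset (Finset (Fin (n + 1))) with IsCayleyFamily F, f F := by
  refine Finset.sum_nbij (fun T => clades id T.1) (fun T _ => Finset.mem_filter.2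
    ⟨Finset.mem_univ _, T.isLabelledTree.isCayleyFamily_clades surjective_id⟩)
    clades_injective.injOn (fun F hF => ?_) fun _ _ => rfl
  obtain ⟨T, hT⟩ := exists_clades_eq (Finset.mem_filter.1 hF).2
  exact ⟨T, Finset.mem_univ T, hT⟩

end CayleyTree

section CladeKey

variable {F : Finset (Finset (Fin n))} {A B : Finset (Fin n)}

/-- The sorting key of the vertex with clade `A` in a tree whose family of clades is `F`. -/
def cladeKey (F : Finset (Finset (Fin n))) (A : Finset (Fin n)) : ℕ :=
  minVal A * (F.card + 1) + cladeDepth F A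

lemma cladeKey_eq_cladeKey_iff (hA : A ∈ F) (hB : B ∈ F) :
    cladeKey F A = cladeKey F B ↔ minVal A = minVal B ∧ cladeDepth F A = cladeDepth F B := by
  have hdivMod {C : Finset (Fin n)} (hC : C ∈ F) : cladeKey F C / (F.card + 1) = minVal C ∧
      cladeKey F C % (F.card + 1) = cladeDepth F C :=
    (Nat.div_mod_unique F.card.succ_pos).2
      ⟨by rw [cladeKey, add_comm, mul_comm], (cladeDepth_lt_card hC).trans (Nat.lt_succ_self _)⟩
  refine ⟨fun h => ?_, fun ⟨hmin, hdepth⟩ => by rw [cladeKey, cladeKey, hmin, hdepth]⟩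
  rw [← (hdivMod hA).1, ← (hdivMod hA).2, h]
  exact hdivMod hB

lemma IsHierarchy.injOn_cladeKey (hF : IsHierarchy F) : Set.InjOn (cladeKey F) F := by
  intro A hA B hB h
  obtain ⟨hmin, hdepth⟩ := (cladeKey_eq_cladeKey_iff hA hB).1 h
  obtain ⟨a, ha⟩ := Finset.min_of_nonempty (hF.nonempty A hA)
  have hb : B.min = a := (minVal_eq_iff (hF.nonempty B hB)).1 (hmin ▸ minVal_eq ha)
  rcases hF.subset_or_subset hA hB (Finset.mem_of_min ha) (Finset.mem_of_min hb) with hAB | hBA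
  · exact hAB.eq_of_not_ssubset fun hlt => (cladeDepth_lt_cladeDepth hB hlt).ne' hdepth
  · exact (hBA.eq_of_not_ssubset fun hlt => (cladeDepth_lt_cladeDepth hA hlt).ne hdepth).symm

end CladeKey

lemma gregRoot_iff {m : ℕ} {v : Fin (n + 1) ⊕ Fin m} : gregRoot v ↔ v = Sum.inl ⊥ :=
  ⟨fun ⟨_, hw, hv⟩ => hv.trans (congrArg Sum.inl (Fin.ext hw)), fun hv => ⟨⊥, rfl, hv⟩⟩

namespace GregRaw

variable {m : ℕ}

lemma beta_eq_minVal (p : Fin n ⊕ Fin m → Fin n ⊕ Fin m) (v : Fin n ⊕ Fin m) :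
    beta p v = minVal (clade Sum.inl p v) := by
  simp only [beta, minVal, mem_clade]
  rfl

variable {p q : Fin (n + 1) ⊕ Fin m → Fin (n + 1) ⊕ Fin m}

lemma depth_eq_cladeDepth (h : IsLabelledTree Sum.inl p) (v : Fin (n + 1) ⊕ Fin m) :
    depth p v = cladeDepth (clades Sum.inl p) (clade Sum.inl p v) := by
  simp only [depth, gregRoot_iff, h.iterate_eq_root_iff]
  exact csInf_Ici

lemma card_clades (h : IsLabelledTree Sum.inl p) :
    (clades Sum.inl p).card = n + 1 + m := by
  rw [h.card_clades, Fintype.card_sum, Fintype.card_fin, Fintype.card_fin]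

lemma key_eq_cladeKey (h : IsLabelledTree Sum.inl p) (u : Fin m) :
    key p u = cladeKey (clades Sum.inl p) (clade Sum.inl p (Sum.inr u)) := by
  rw [key, cladeKey, beta_eq_minVal, depth_eq_cladeDepth h, card_clades h]

lemma range_key (h : IsLabelledTree Sum.inl p) : Set.range (key p) =
    cladeKey (clades Sum.inl p) ''
      ((clades Sum.inl p : Set _) \ Set.range (minClade (clades Sum.inl p))) := by
  have hkey : key p = cladeKey (clades Sum.inl p) ∘ clade Sum.inl p ∘ Sum.inr :=
    funext (key_eq_cladeKey h)
  have hlab : minClade (clades Sum.inl p) = clade Sum.inl p ∘ Sum.inl :=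
    funext fun _ => minClade_clades
  rw [hkey, Set.range_comp, Set.range_comp, ← Set.compl_range_inl, Set.compl_eq_univ_sdiff,
    Set.image_sdiff h.clade_injective, Set.image_univ, coe_clades, ← Set.range_comp, hlab]

lemma eq_of_clades_eq (hp : IsLabelledTree Sum.inl p) (hq : IsLabelledTree Sum.inl q)
    (hkp : StrictMono (key p)) (hkq : StrictMono (key q))
    (h : clades Sum.inl p = clades Sum.inl q) : p = q := by
  have hkey : key p = key q := (hkp.range_inj hkq).1 (by rw [range_key hp, range_key hq, h])
  refine hp.parent_eq_of_clade_eq hq (funext ?_)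
  rintro (a | u)
  · rw [← minClade_clades, ← minClade_clades, h]
  · refine hp.isGregFamily_clades.injOn_cladeKey (clade_mem_clades _) (h ▸ clade_mem_clades _) ?_
    rw [← key_eq_cladeKey hp, hkey, key_eq_cladeKey hq, h]

end GregRaw

lemma gregCond_iff {m : ℕ} {p : Fin (n + 1) ⊕ Fin m → Fin (n + 1) ⊕ Fin m} :
    GregCond (n + 1) m p ↔ IsLabelledTree Sum.inl p ∧ StrictMono (GregRaw.key p) := by
  constructor
  · rintro ⟨hroot, hreach, hbranch, hkey⟩
    refine ⟨⟨Sum.inl_injective, hroot _ (gregRoot_iff.2 rfl),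
      fun v => (hreach v).imp fun _ hk => gregRoot_iff.1 hk.2, ?_⟩, fun u w => (hkey u w).1⟩
    rintro (a | u) hv
    · exact (hv ⟨a, rfl⟩).elim
    · exact Set.one_lt_ncard_iff_nontrivial.1 (hbranch u)
  · rintro ⟨h, hkey⟩
    refine ⟨fun v hv => ?_, fun v => ?_, fun u => ?_, fun u w => hkey.lt_iff_lt.symm⟩
    · rw [gregRoot_iff.1 hv, h.root]
    · obtain ⟨k, hk, hroot⟩ := h.exists_iterate_eq_root v
      rw [← h.card_clades, GregRaw.card_clades h] at hk
      exact ⟨k, hk, gregRoot_iff.2 hroot⟩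
    · exact Set.one_lt_ncard_iff_nontrivial.2 (h.branching _ fun ⟨_, ha⟩ => Sum.inl_ne_inr ha)

lemma exists_range_eq_strictMono_comp {β γ : Type*} [LinearOrder γ] {K : β → γ} {s : Finset β}
    (hK : Set.InjOn K s) : ∃ e : Fin s.card → β, Set.range e = s ∧ StrictMono (K ∘ e) := by
  let f := (s.image K).orderEmbOfFin (Finset.card_image_of_injOn hK)
  have hrange : Set.range f = K '' s := by
    rw [Finset.range_orderEmbOfFin, Finset.coe_image]
  have hlift (i : Fin s.card) : f i ∈ K '' s := hrange ▸ Set.mem_range_self i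
  choose e hes hKe using hlift
  refine ⟨e, (Set.range_subset_iff.2 hes).antisymm fun b hb => ?_, ?_⟩
  · obtain ⟨i, hi⟩ : K b ∈ Set.range f := hrange ▸ Set.mem_image_of_mem K hb
    exact ⟨i, hK (hes i) hb ((hKe i).trans hi)⟩
  · rw [show K ∘ e = f from funext hKe]
    exact f.strictMono

namespace GregTree

variable (G : GregTree (n + 1))

lemma isLabelledTree : IsLabelledTree Sum.inl G.2.1 := (gregCond_iff.1 G.2.2).1

lemma unl_eq_card_clades_sub : G.unl = (clades Sum.inl G.2.1).card - (n + 1) := by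
  rw [GregRaw.card_clades G.isLabelledTree, Nat.add_sub_cancel_left, unl]

lemma impp_eq_card_improperLabels : G.impp = (improperLabels (clades Sum.inl G.2.1)).card := by
  rw [impp, ← Set.ncard_coe_finset]
  congr 1
  ext a
  rw [Set.mem_ofPred_eq, ImproperParent, beta, GregRaw.beta_eq_minVal, Finset.mem_coe,
    G.isLabelledTree.mem_improperLabels_clades, Ne,
    minVal_eq_iff (G.isLabelledTree.clade_nonempty _)]

lemma clades_injective : Injective fun G : GregTree (n + 1) => clades Sum.inl G.2.1 := by
  rintro ⟨m, p, hp⟩ ⟨m', q, hq⟩ h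
  obtain ⟨hp', hkp⟩ := gregCond_iff.1 hp
  obtain ⟨hq', hkq⟩ := gregCond_iff.1 hq
  obtain rfl : m = m' := Fin.ext <| Nat.add_left_cancel (n := n + 1) <| by
    rw [← GregRaw.card_clades hp', ← GregRaw.card_clades hq']
    exact congrArg Finset.card h
  obtain rfl := GregRaw.eq_of_clades_eq hp' hq' hkp hkq h
  rfl

lemma exists_clades_eq {F : Finset (Finset (Fin (n + 1)))} (hF : IsGregFamily F) :
    ∃ G : GregTree (n + 1), clades Sum.inl G.2.1 = F := by
  let s : Finset (Finset (Fin (n + 1))) := F \ Finset.univ.image (minClade F)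
  have himage : Finset.univ.image (minClade F) ⊆ F :=
    Finset.image_subset_iff.2 fun a _ => hF.minClade_mem a
  have hs : s.card < n + 1 + 1 := by
    have hcard := hF.card_le_two_mul_card
    rw [Finset.card_sdiff_of_subset himage, Finset.card_image_of_injective _ hF.minClade_injective,
      Finset.card_univ]
    rw [Fintype.card_fin] at hcard ⊢
    lia
  obtain ⟨e, hrange, hmono⟩ := exists_range_eq_strictMono_comp
    (s := s)
    (hF.injOn_cladeKey.mono (Finset.coe_subset.2 Finset.sdiff_subset))
  have he : Injective e := hmono.injective.of_comp
  have hne (a : Fin (n + 1)) (u : Fin s.card) : minClade F a ≠ e u := fun h => by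
    have hu : e u ∈ s := Finset.mem_coe.1 (hrange ▸ Set.mem_range_self u)
    exact (Finset.mem_sdiff.1 hu).2 (h ▸ Finset.mem_image_of_mem _ (Finset.mem_univ a))
  have he_range : Set.range (Sum.elim (minClade F) e) = F := by
    rw [Set.Sum.elim_range, hrange, Finset.coe_sdiff, Finset.coe_image, Finset.coe_univ,
      Set.image_univ, Set.union_sdiff_cancel (Set.range_subset_iff.2 hF.minClade_mem)]
  obtain ⟨p, hp, hclade⟩ := hF.exists_isLabelledTree (lab := Sum.inl)
    (hF.minClade_injective.sumElim he hne) he_range fun _ => rfl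
  have hclades : clades Sum.inl p = F := by
    rw [← Finset.coe_inj, coe_clades, hclade, he_range]
  refine ⟨⟨⟨s.card, hs⟩, p, gregCond_iff.2 ⟨hp, ?_⟩⟩, hclades⟩
  rw [funext (GregRaw.key_eq_cladeKey hp), hclades, hclade]
  exact hmono

open scoped Classical in
lemma sum_clades {M : Type*} [AddCommMonoid M] (f : Finset (Finset (Fin (n + 1))) → M) :
    ∑ G : GregTree (n + 1), f (clades Sum.inl G.2.1)
      = ∑ F : Finset (Finset (Fin (n + 1))) with IsGregFamily F, f F := by
  refine Finset.sum_nbij (fun G => clades Sum.inl G.2.1)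
    (fun G _ => Finset.mem_filter.2 ⟨Finset.mem_univ _, G.isLabelledTree.isGregFamily_clades⟩)
    clades_injective.injOn (fun F hF => ?_) fun _ _ => rfl
  obtain ⟨G, hG⟩ := exists_clades_eq (Finset.mem_filter.1 hF).2
  exact ⟨G, Finset.mem_univ G, hG⟩

end GregTree

end Encodings

theorem sum_gregTree_eq_sum_cayleyTree_general {R : Type*} [CommSemiring R] (y t : R) (n : ℕ) :
    ∑ G : GregTree (n + 1), y ^ G.unl * t ^ G.impp
      = ∑ T : CayleyTree (n + 1), (y + 1) ^ (T.impe - T.impp) * (y + t) ^ T.impp := by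
  simp only [GregTree.unl_eq_card_clades_sub, GregTree.impp_eq_card_improperLabels,
    CayleyTree.impe_eq_card_improperMembers, CayleyTree.impp_eq_card_improperLabels]
  rw [GregTree.sum_clades fun F => y ^ (F.card - (n + 1)) * t ^ (improperLabels F).card,
    CayleyTree.sum_clades fun T => (y + 1) ^ ((improperMembers T).card - (improperLabels T).card)
      * (y + t) ^ (improperLabels T).card,
    ← sum_isGregFamily_eq_sum_isCayleyFamily, Fintype.card_fin]

/-- For every `n ≥ 1`, as polynomials in `y = X 0` and `t = X 1`,
`Σ_{G ∈ G_{n+1}} y^{unl G} t^{impp G}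
  = Σ_{T ∈ C_{n+1}} (y+1)^{impe T - impp T} (y+t)^{impp T}`. -/
theorem sum_gregTree_eq_sum_cayleyTree (n : ℕ) (hn : 1 ≤ n) :
    ∑ G : GregTree (n + 1), (X 0 : MvPolynomial (Fin 2) ℚ) ^ G.unl * X 1 ^ G.impp
      = ∑ T : CayleyTree (n + 1),
          ((X 0 : MvPolynomial (Fin 2) ℚ) + 1) ^ (T.impe - T.impp)
            * (X 0 + X 1) ^ T.impp :=
  sum_gregTree_eq_sum_cayleyTree_general (X 0) (X 1) n

end
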